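/- Let R be a finitely generated ℕ-graded k-algebra of Krull dimension d, and let I be a homogeneous ideal with R/I of finite length such that the R-module R/I has finite projective dimension. Set b_{α,j} = λ_k(Tor_α^R(k, R/I)_j), 𝔹(j) = Σ_{α=0}^{∞} (−1)^α b_{α,j}, and let b be the smallest integer such that 𝔹(j) = 0 for all j > b. Then for every nonzero complex number y, F(R,R,I)(y) = e_R · (Σ_{j=0}^{b} 𝔹(j) e^{−iyj}) / (iy)^d, where e_R is the Hilbert–Samuel multiplicity of R. -/

import Mathlib

open Filter Complex

noncomputable section

/-- The Frobenius bracket power `I^{[q]}` of an ideal. -/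
def bracketPow {R : Type*} [CommSemiring R] (I : Ideal R) (q : ℕ) : Ideal R :=
  Ideal.span ((fun x : R => x ^ q) '' (I : Set R))

/-- The map induced by an `R`-linear map on the quotients by `J • ⊤`. -/
def inducedQuot {R A B : Type*} [CommRing R] [AddCommGroup A] [Module R A]
    [AddCommGroup B] [Module R B] (J : Ideal R) (f : A →ₗ[R] B) :
    (A ⧸ (J • ⊤ : Submodule R A)) →ₗ[R] B ⧸ (J • ⊤ : Submodule R B) :=
  Submodule.mapQ _ _ f (by
    rw [← Submodule.map_le_iff_le_comap, Submodule.map_smul'']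
    exact Submodule.smul_mono le_rfl le_top)

/-- Degree-`j` cycles at homological spot `i` of the complex `F_• ⧸ J F_•` obtained from a
graded free resolution `(F, ℱ, dF)`. -/
def cyclesPiece (k : Type*) {R : Type*} [Field k] [CommRing R] [Algebra k R]
    (F : ℕ → Type) [∀ i, AddCommGroup (F i)] [∀ i, Module R (F i)]
    [∀ i, Module k (F i)] [∀ i, IsScalarTower k R (F i)]
    (ℱ : ∀ i, ℤ → Submodule k (F i))
    (dF : ∀ i, F (i + 1) →ₗ[R] F i)
    (J : Ideal R) (i : ℕ) (j : ℤ) : Submodule k (F i ⧸ (J • ⊤ : Submodule R (F i))) :=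
  match i with
  | 0 => (ℱ 0 j).map (((J • ⊤ : Submodule R (F 0)).mkQ).restrictScalars k)
  | (i' + 1) =>
      (ℱ (i' + 1) j).map (((J • ⊤ : Submodule R (F (i' + 1))).mkQ).restrictScalars k) ⊓
        (LinearMap.ker (inducedQuot J (dF i'))).restrictScalars k

/-- Degree-`j` boundaries at homological spot `i` of the complex `F_• ⧸ J F_•`. -/
def boundariesPiece (k : Type*) {R : Type*} [Field k] [CommRing R] [Algebra k R]
    (F : ℕ → Type) [∀ i, AddCommGroup (F i)] [∀ i, Module R (F i)]
    [∀ i, Module k (F i)] [∀ i, IsScalarTower k R (F i)]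
    (ℱ : ∀ i, ℤ → Submodule k (F i))
    (dF : ∀ i, F (i + 1) →ₗ[R] F i)
    (J : Ideal R) (i : ℕ) (j : ℤ) : Submodule k (F i ⧸ (J • ⊤ : Submodule R (F i))) :=
  (ℱ i j).map (((J • ⊤ : Submodule R (F i)).mkQ).restrictScalars k) ⊓
    (LinearMap.range (inducedQuot J (dF i))).restrictScalars k

/-- `λ_k(Tor_i^R(M, R/J)_j)`, computed from a graded free resolution `(F, ℱ, dF)` of `M`
as the dimension of degree-`j` cycles minus the dimension of degree-`j` boundaries of
`F_• ⧸ J F_•` at spot `i`. -/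
def torPieceDim (k : Type*) {R : Type*} [Field k] [CommRing R] [Algebra k R]
    (F : ℕ → Type) [∀ i, AddCommGroup (F i)] [∀ i, Module R (F i)]
    [∀ i, Module k (F i)] [∀ i, IsScalarTower k R (F i)]
    (ℱ : ∀ i, ℤ → Submodule k (F i))
    (dF : ∀ i, F (i + 1) →ₗ[R] F i)
    (J : Ideal R) (i : ℕ) (j : ℤ) : ℕ :=
  Module.finrank k (cyclesPiece k F ℱ dF J i j) -
    Module.finrank k (boundariesPiece k F ℱ dF J i j)

/-- The alternating sum `Σ_α (-1)^α λ_k(Tor_α(R/J ⊗ -)_j)` of graded Betti-type numbers. -/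
def torAltSum (k : Type*) {R : Type*} [Field k] [CommRing R] [Algebra k R]
    (F : ℕ → Type) [∀ i, AddCommGroup (F i)] [∀ i, Module R (F i)]
    [∀ i, Module k (F i)] [∀ i, IsScalarTower k R (F i)]
    (ℱ : ∀ i, ℤ → Submodule k (F i))
    (dF : ∀ i, F (i + 1) →ₗ[R] F i)
    (J : Ideal R) (j : ℤ) : ℂ :=
  ∑' α : ℕ, (-1 : ℂ) ^ α * (torPieceDim k F ℱ dF J α j : ℂ)

/-- `p^{-nd} Σ_{j∈ℤ} λ_k((R/I^{[pⁿ]})_j) e^{-iyj/pⁿ}`. -/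
def FnGen (k : Type*) {R M : Type*} [Field k] [CommRing R] [Algebra k R]
    [AddCommGroup M] [Module R M] [Module k M] [IsScalarTower k R M]
    (ℳ : ℤ → Submodule k M) (I : Ideal R) (p d n : ℕ) (y : ℂ) : ℂ :=
  (1 / (p : ℂ) ^ n) ^ d *
    ∑' j : ℤ, (Module.finrank k ((ℳ j).map
        (((bracketPow I (p ^ n) • ⊤ : Submodule R M)).mkQ.restrictScalars k)) : ℂ) *
      Complex.exp (-Complex.I * y * (j : ℂ) / (p : ℂ) ^ n)

/-- Hilbert–Samuel sequence `d!·n^{-d}·Σ_{j ≤ n} λ_k(R_j)`. -/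
def hsSeq (k : Type*) {R : Type*} [Field k] [AddCommGroup R] [Module k R]
    (𝒜 : ℤ → Submodule k R) (d n : ℕ) : ℝ :=
  (d.factorial : ℝ) / (n : ℝ) ^ d *
    ∑' j : ℤ, (if j ≤ (n : ℤ) then (Module.finrank k (𝒜 j) : ℝ) else 0)

namespace FP

section Acyc

open scoped Pointwise
set_option linter.unusedSectionVars false
set_option linter.unusedVariables false

variable {R : Type} [CommRing R]

/-- A matrix over `R` acting on column vectors with entries in an `R`-module. -/
def act {m n : Type} [Fintype n] (A : Matrix m n R) (N : Type) [AddCommGroup N] [Module R N] :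
    (n → N) →ₗ[R] (m → N) where
  toFun v i := ∑ j, A i j • v j
  map_add' v w := by
    ext i; simp [smul_add, Finset.sum_add_distrib]
  map_smul' r v := by
    ext i
    simp only [Pi.smul_apply, RingHom.id_apply, Finset.smul_sum]
    exact Finset.sum_congr rfl fun j _ => smul_comm _ _ _

lemma act_apply {m n : Type} [Fintype n] (A : Matrix m n R) (N : Type) [AddCommGroup N]
    [Module R N] (v : n → N) (i : m) : act A N v i = ∑ j, A i j • v j := rfl

lemma act_mul {l m n : Type} [Fintype m] [Fintype n] (A : Matrix l m R) (B : Matrix m n R)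
    (N : Type) [AddCommGroup N] [Module R N] (v : n → N) :
    act (A * B) N v = act A N (act B N v) := by
  ext i
  simp only [act_apply, Matrix.mul_apply, Finset.sum_smul, Finset.smul_sum, mul_smul]
  exact Finset.sum_comm

lemma act_map {m n : Type} [Fintype n] (A : Matrix m n R) {N N' : Type} [AddCommGroup N]
    [Module R N] [AddCommGroup N'] [Module R N'] (f : N →ₗ[R] N') (v : n → N) :
    (fun i => f (act A N v i)) = act A N' (fun j => f (v j)) := by
  ext i; simp [act_apply]

lemma act_add {m n : Type} [Fintype n] (A B : Matrix m n R) (N : Type) [AddCommGroup N]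
    [Module R N] (v : n → N) : act (A + B) N v = act A N v + act B N v := by
  ext i; simp [act_apply, add_smul, Finset.sum_add_distrib]

lemma act_smul_one {n : Type} [Fintype n] [DecidableEq n] (r : R) (N : Type) [AddCommGroup N]
    [Module R N] (v : n → N) : act (r • (1 : Matrix n n R)) N v = r • v := by
  ext i; simp [act_apply, Matrix.one_apply, ite_smul]

lemma act_zero {m n : Type} [Fintype n] (N : Type) [AddCommGroup N]
    [Module R N] (v : n → N) : act (0 : Matrix m n R) N v = 0 := by
  ext i; simp [act_apply]

variable {c : ℕ → Type} [∀ i, Fintype (c i)] [∀ i, DecidableEq (c i)]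

/-- Exactness at spot `i+1` of the complex with coefficients in `N`. -/
def ExAt (A : ∀ i, Matrix (c i) (c (i + 1)) R) (i : ℕ) (N : Type) [AddCommGroup N]
    [Module R N] : Prop :=
  ∀ v : c (i + 1) → N, act (A i) N v = 0 → ∃ w, act (A (i + 1)) N w = v

variable (A : ∀ i, Matrix (c i) (c (i + 1)) R) (hA : ∀ i, A i * A (i + 1) = 0)

include hA in
lemma act_act (i : ℕ) (N : Type) [AddCommGroup N] [Module R N] (v) :
    act (A i) N (act (A (i + 1)) N v) = 0 := by
  rw [← act_mul, hA, act_zero]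

lemma ExAt.equiv {i : ℕ} {N N' : Type} [AddCommGroup N] [Module R N] [AddCommGroup N']
    [Module R N'] (e : N ≃ₗ[R] N') (h : ExAt A i N) : ExAt A i N' := by
  intro v hv
  obtain ⟨w, hw⟩ := h (fun j => e.symm (v j)) (by
    have := act_map (A i) (e.symm : N' →ₗ[R] N) v
    simp only [LinearEquiv.coe_coe] at this
    rw [← this, hv]; ext; simp)
  refine ⟨fun j => e (w j), ?_⟩
  have := act_map (A (i + 1)) (e : N →ₗ[R] N') w
  simp only [LinearEquiv.coe_coe] at this
  rw [← this, hw]; ext; simp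

lemma ExAt.subsingleton {i : ℕ} {N : Type} [AddCommGroup N] [Module R N] [Subsingleton N] :
    ExAt A i N := fun v _ => ⟨0, Subsingleton.elim _ _⟩

section ses
variable {N₁ N₂ N₃ : Type} [AddCommGroup N₁] [Module R N₁] [AddCommGroup N₂] [Module R N₂]
  [AddCommGroup N₃] [Module R N₃] {f : N₁ →ₗ[R] N₂} {g : N₂ →ₗ[R] N₃}
  (hf : Function.Injective f) (hg : Function.Surjective g) (hfg : Function.Exact f g)

include hg in
lemma lift_vec {n : Type} (v : n → N₃) : ∃ w : n → N₂, (fun j => g (w j)) = v := by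
  choose s hs using hg
  exact ⟨fun j => s (v j), by ext; simp [hs]⟩

include hfg in
lemma lift_vec' {n : Type} (v : n → N₂) (hv : (fun j => g (v j)) = 0) :
    ∃ w : n → N₁, (fun j => f (w j)) = v := by
  have : ∀ j, ∃ w, f w = v j := fun j => (hfg (v j)).1 (congrFun hv j)
  choose w hw using this
  exact ⟨w, funext hw⟩

include hf in
lemma inj_vec {n : Type} {v w : n → N₁} (h : (fun j => f (v j)) = fun j => f (w j)) : v = w :=
  funext fun j => hf (congrFun h j)

include hA hf hg hfg in
lemma ExAt.mid {i : ℕ} (h₁ : ExAt A i N₁) (h₃ : ExAt A i N₃) : ExAt A i N₂ := by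
  intro v hv
  obtain ⟨w, hw⟩ := h₃ (fun j => g (v j)) (by rw [← act_map, hv]; ext; simp)
  obtain ⟨w, rfl⟩ := lift_vec hg w
  rw [← act_map] at hw
  obtain ⟨v', hv'⟩ := lift_vec' hfg (v - act (A (i + 1)) N₂ w) (by
    ext j; simpa using (sub_eq_zero.2 (congrFun hw j).symm))
  obtain ⟨w', hw'⟩ := h₁ v' (by
    apply inj_vec hf
    rw [act_map, hv', map_sub, hv, act_act A hA]; ext; simp)
  refine ⟨w + fun j => f (w' j), ?_⟩
  rw [map_add, ← act_map, hw', hv']; abel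

include hA hf hg hfg in
lemma ExAt.left {i : ℕ} (h₂ : ExAt A i N₂) (h₃ : ExAt A (i + 1) N₃) : ExAt A i N₁ := by
  intro v hv
  obtain ⟨w, hw⟩ := h₂ (fun j => f (v j)) (by rw [← act_map, hv]; ext; simp)
  obtain ⟨u, hu⟩ := h₃ (fun j => g (w j)) (by
    rw [← act_map, hw]; ext j; simpa using (hfg (f (v j))).2 ⟨_, rfl⟩)
  obtain ⟨u, rfl⟩ := lift_vec hg u
  rw [← act_map] at hu
  obtain ⟨w', hw'⟩ := lift_vec' hfg (w - act (A (i + 1 + 1)) N₂ u) (by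
    ext j; simpa using (sub_eq_zero.2 (congrFun hu j).symm))
  refine ⟨w', inj_vec hf ?_⟩
  rw [act_map, hw', map_sub, hw, act_act A hA, sub_zero]

include hf hg hfg in
lemma ExAt.right {i : ℕ} (hA : ∀ i, A i * A (i + 1) = 0)
    (h₁ : ExAt A i N₁) (h₂ : ExAt A (i + 1) N₂) : ExAt A (i + 1) N₃ := by
  intro v hv
  obtain ⟨v, rfl⟩ := lift_vec hg v
  rw [← act_map] at hv
  obtain ⟨v', hv'⟩ := lift_vec' hfg _ hv
  obtain ⟨w', hw'⟩ := h₁ v' (by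
    apply inj_vec hf
    rw [act_map, hv', act_act A hA]; ext; simp)
  obtain ⟨u, hu⟩ := h₂ (v - fun j => f (w' j)) (by
    rw [map_sub, ← act_map, hw', hv', sub_self])
  refine ⟨fun j => g (u j), ?_⟩
  rw [← act_map, hu]
  ext j
  have := (hfg (f (w' j))).2 ⟨_, rfl⟩
  simp [this]

end ses

variable (𝔪 : Ideal R)
  (hH : ∀ x ∈ 𝔪, ∀ i, ∃ (n : ℕ) (S : Matrix (c (i + 2)) (c (i + 1)) R)
    (T : Matrix (c (i + 1)) (c i) R), A (i + 1) * S + T * A i = x ^ n • 1)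

lemma ses_quot (x : R) (N : Type) [AddCommGroup N] [Module R N] (hx : IsSMulRegular N x) :
    Function.Injective (LinearMap.lsmul R N x) ∧
    Function.Surjective (Submodule.mkQ (x • (⊤ : Submodule R N))) ∧
    Function.Exact (LinearMap.lsmul R N x) (Submodule.mkQ (x • (⊤ : Submodule R N))) := by
  refine ⟨hx, Submodule.mkQ_surjective _, ?_⟩
  intro y
  simp [Submodule.mem_smul_pointwise_iff_exists]

include hA hH in
lemma ExAt.of_regular {x : R} (hx : x ∈ 𝔪) {i : ℕ} {N : Type} [AddCommGroup N] [Module R N]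
    (hxN : IsSMulRegular N x) (h : ExAt A (i + 1) (QuotSMulTop x N)) : ExAt A i N := by
  obtain ⟨h1, h2, h3⟩ := ses_quot x N hxN
  have key : ∀ v : c (i + 1) → N, (∃ w, act (A (i + 1)) N w = x • v) →
      ∃ w, act (A (i + 1)) N w = v := by
    rintro v ⟨w, hw⟩
    obtain ⟨u, hu⟩ := h (fun j => Submodule.mkQ (x • (⊤ : Submodule R N)) (w j)) (by
      rw [← act_map, hw]; ext j; simpa using (h3 (x • v j)).2 ⟨_, rfl⟩)
    obtain ⟨u, rfl⟩ := lift_vec h2 u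
    rw [← act_map] at hu
    obtain ⟨w', hw'⟩ := lift_vec' h3 (w - act (A (i + 1 + 1)) N u) (by
      ext j
      have := congrFun hu j
      rw [Pi.sub_apply, map_sub, ← this, sub_self]; rfl)
    refine ⟨w', inj_vec h1 ?_⟩
    rw [act_map, hw', map_sub, hw, act_act A hA, sub_zero]
    rfl
  intro v hv
  obtain ⟨n, S, T, hST⟩ := hH x hx i
  have h0 : ∃ w, act (A (i + 1)) N w = x ^ n • v := by
    refine ⟨act S N v, ?_⟩
    rw [← act_smul_one, ← hST, act_add, act_mul, act_mul, hv, map_zero, add_zero]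
  clear hST
  induction n with
  | zero => simpa using h0
  | succ n ih =>
    apply ih
    apply key
    rwa [smul_smul, ← pow_succ']

open RingTheory.Sequence

include hA in
lemma ExAt.quot_list (xs : List R) : ∀ (N : Type) [AddCommGroup N] [Module R N] (m : ℕ),
    IsWeaklyRegular N xs → (∀ i, m ≤ i → ExAt A i N) →
    ∀ i, m + xs.length ≤ i → ExAt A i (N ⧸ (Ideal.ofList xs • ⊤ : Submodule R N)) := by
  induction xs with
  | nil =>
    intro N _ _ m _ h i hi
    refine (h i (by simpa using hi)).equiv A (Submodule.quotEquivOfEqBot _ ?_).symm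
    simp
  | cons x xs ih =>
    intro N _ _ m hreg h i hi
    rw [isWeaklyRegular_cons_iff] at hreg
    refine (ih (QuotSMulTop x N) (m + 1) hreg.2 ?_ i (by simp at hi; omega)).equiv A
      (Submodule.quotOfListConsSMulTopEquivQuotSMulTopInner N x xs).symm
    intro i hi
    obtain ⟨i, rfl⟩ : ∃ i', i = i' + 1 := ⟨i - 1, by omega⟩
    obtain ⟨h1, h2, h3⟩ := ses_quot x N hreg.1
    exact ExAt.right A h1 h2 h3 hA (h i (by omega)) (h (i + 1) (by omega))

include hA hH in
lemma ExAt.of_list (r : ℕ) (hr : ∀ (N : Type) [AddCommGroup N] [Module R N] (i : ℕ), r ≤ i →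
    ExAt A i N) (xs : List R) : ∀ (N : Type) [AddCommGroup N] [Module R N],
    (∀ x ∈ xs, x ∈ 𝔪) → IsWeaklyRegular N xs →
    ∀ i, r ≤ i + xs.length → ExAt A i N := by
  induction xs with
  | nil => intro N _ _ _ _ i hi; exact hr N i (by simpa using hi)
  | cons x xs ih =>
    intro N _ _ hm hreg i hi
    rw [isWeaklyRegular_cons_iff] at hreg
    refine ExAt.of_regular A hA 𝔪 hH (hm x (by simp)) hreg.1 ?_
    exact ih _ (fun y hy => hm y (by simp [hy])) hreg.2 (i + 1) (by simp at hi; omega)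

include hA hH in
lemma ExAt.of_residue [IsNoetherianRing R] [h𝔪 : 𝔪.IsMaximal] (s : ℕ)
    (hs : ∀ (N : Type) [AddCommGroup N] [Module R N], ExAt A (s + 1) N)
    (hk : ExAt A s (R ⧸ 𝔪)) (N : Type) [AddCommGroup N] [Module R N] : ExAt A s N := by
  have fg : ∀ (N : Type) [AddCommGroup N] [Module R N] [Module.Finite R N], ExAt A s N := by
    intro N _ _ hN
    induction hN using IsNoetherianRing.induction_on_isQuotientEquivQuotientPrime with
    | subsingleton N => exact ExAt.subsingleton A
    | quotient N P e =>
      refine ExAt.equiv A e.symm ?_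
      by_cases hP : 𝔪 ≤ P.1
      · have : 𝔪 = P.1 := h𝔪.eq_of_le P.2.ne_top hP
        rwa [← this]
      · obtain ⟨x, hx, hxP⟩ := Set.not_subset.1 hP
        refine ExAt.of_regular A hA 𝔪 hH hx ?_ (hs _)
        rw [isSMulRegular_iff_right_eq_zero_of_smul]
        intro a
        obtain ⟨a, rfl⟩ := Ideal.Quotient.mk_surjective a
        intro ha
        rw [← Ideal.Quotient.mk_eq_mk, ← Submodule.Quotient.mk_smul, Ideal.Quotient.mk_eq_mk,
          Ideal.Quotient.eq_zero_iff_mem] at ha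
        rw [Ideal.Quotient.eq_zero_iff_mem]
        exact (P.2.mem_or_mem ha).resolve_left hxP
    | exact N₁ N₂ N₃ f g hf hg hfg h₁ h₃ => exact ExAt.mid A hA hf hg hfg h₁ h₃
  intro v hv
  let N₀ : Submodule R N := Submodule.span R (Set.range v)
  have : Module.Finite R N₀ := Module.Finite.span_of_finite R (Set.finite_range v)
  let v₀ : c (s + 1) → N₀ := fun j => ⟨v j, Submodule.subset_span ⟨j, rfl⟩⟩
  obtain ⟨w, hw⟩ := fg N₀ v₀ (by
    apply inj_vec N₀.injective_subtype
    rw [act_map]; ext j; simpa [v₀] using congrFun hv j)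
  refine ⟨fun j => N₀.subtype (w j), ?_⟩
  rw [← act_map, hw]
  rfl

include hA hH in
theorem acyc [IsNoetherianRing R] [h𝔪 : 𝔪.IsMaximal] (ℓ : ℕ)
    (hℓ : ∀ i, ℓ < i → IsEmpty (c i)) (hR : ∀ i, ExAt A i R) (q : ℕ)
    (S : Type) [CommRing S] [Algebra R S] (e : R ≃+* S)
    (hS : ∀ x : R, algebraMap R S x = e (x ^ q)) (i : ℕ) : ExAt A i S := by
  classical
  let P : ℕ → Prop := fun r => ∀ (N : Type) [AddCommGroup N] [Module R N] (i : ℕ), r ≤ i →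
    ExAt A i N
  have hP : ∃ r, P r := ⟨ℓ, fun N _ _ i hi v _ => by
    have := hℓ (i + 1) (by omega)
    exact ⟨0, Subsingleton.elim _ _⟩⟩
  have hr := Nat.find_spec hP
  have hmin : ∀ m, m < Nat.find hP → ¬ P m := fun m hm => Nat.find_min hP hm
  set r := Nat.find hP
  have key : ∀ t, t ≤ r → ∃ xs : List R, xs.length = t ∧ (∀ x ∈ xs, x ∈ 𝔪) ∧
      IsWeaklyRegular R (xs.map (· ^ q)) := by
    intro t
    induction t with
    | zero => exact fun _ => ⟨[], by simp⟩
    | succ t ih =>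
      intro ht
      obtain ⟨xs, hlen, hxs, hreg⟩ := ih (by omega)
      obtain ⟨s, hs⟩ : ∃ s, r = s + 1 := ⟨r - 1, by omega⟩
      have hnk : ¬ ExAt A s (R ⧸ 𝔪) := by
        intro hk
        apply hmin s (by omega)
        intro N _ _ i hi
        rcases hi.eq_or_lt with rfl | hi
        · exact ExAt.of_residue A hA 𝔪 hH s (fun N _ _ => hr N _ (by omega)) hk N
        · exact hr N i (by omega)
      let N := R ⧸ (Ideal.ofList (xs.map (· ^ q)) • ⊤ : Submodule R R)
      have hN : ExAt A s N := ExAt.quot_list A hA (xs.map (· ^ q)) R 0 hreg (fun i _ => hR i) s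
        (by simp; omega)
      have hAss : 𝔪 ∉ associatedPrimes R N := by
        intro hm
        rw [AssociatedPrimes.mem_iff, isAssociatedPrime_iff] at hm
        obtain ⟨_, z, hz⟩ := hm
        have hz' : ∀ a, a ∈ 𝔪 ↔ a • z = 0 := by
          intro a; rw [hz]; simp [Submodule.mem_colon_singleton]
        have hker : 𝔪 = LinearMap.ker (LinearMap.toSpanSingleton R N z) := by
          ext a; rw [hz']; simp
        let f : (R ⧸ 𝔪) →ₗ[R] N := Submodule.liftQ 𝔪 (LinearMap.toSpanSingleton R N z) hker.le
        have hf : Function.Injective f := by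
          rw [← LinearMap.ker_eq_bot]
          exact Submodule.ker_liftQ_eq_bot' _ _ hker
        exact hnk (ExAt.left A hA hf (Submodule.mkQ_surjective (LinearMap.range f))
          (LinearMap.exact_map_mkQ_range f) hN (hr _ _ (by omega)))
      have : ∃ x ∈ 𝔪, IsSMulRegular N x := by
        by_contra! hcon
        have hsub : (𝔪 : Set R) ⊆ ⋃ p ∈ associatedPrimes R N, (p : Set R) := by
          rw [biUnion_associatedPrimes_eq_compl_regular R N]
          exact hcon
        obtain ⟨p, hp, hle⟩ := (𝔪.subset_union_prime_finite (associatedPrimes.finite R N)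
          (f := id) 0 0 fun _ h _ _ ↦ h.1).1 hsub
        exact hAss (h𝔪.eq_of_le hp.1.ne_top hle ▸ hp)
      obtain ⟨x, hx, hxN⟩ := this
      refine ⟨xs ++ [x], by simp [hlen], ?_, ?_⟩
      · intro y hy
        rcases List.mem_append.1 hy with h | h
        · exact hxs y h
        · simp at h; rwa [h]
      · rw [List.map_append, isWeaklyRegular_append_iff]
        refine ⟨hreg, ?_⟩
        simp only [List.map_cons, List.map_nil, isWeaklyRegular_singleton_iff]
        exact hxN.pow q
  obtain ⟨xs, hlen, hxs, hreg⟩ := key r le_rfl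
  refine ExAt.of_list A hA 𝔪 hH r hr xs S hxs ?_ i (by omega)
  rw [← isWeaklyRegular_map_algebraMap_iff S S xs]
  have h1 : xs.map (algebraMap R S) = (xs.map (· ^ q)).map e := by
    simp [hS]
  rw [h1]
  rw [← AddEquiv.isWeaklyRegular_congr (e := e.toAddEquiv) (as := xs.map (· ^ q))]
  · exact hreg
  · rw [List.forall₂_map_right_iff]
    exact List.forall₂_same.2 fun x _ y => by simp

end Acyc
end FP

namespace FP
section Analysis
open Polynomial Topology

lemma choose_ratio (d : ℕ) (S : ℕ → ℝ) (e : ℝ)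
    (he : Tendsto (fun n : ℕ => (d.factorial : ℝ) / (n : ℝ) ^ d * S n) atTop (𝓝 e)) :
    Tendsto (fun n : ℕ => S n / ((n + d).choose d : ℝ)) atTop (𝓝 e) := by
  have h1 : Tendsto (fun n : ℕ => (d.factorial * (n + d).choose d : ℝ) / (n : ℝ) ^ d) atTop
      (𝓝 1) := by
    have hup : Tendsto (fun n : ℕ => (((n : ℝ) + d) / n) ^ d) atTop (𝓝 1) := by
      have : Tendsto (fun n : ℕ => (1 : ℝ) + (d : ℝ) / n) atTop (𝓝 (1 + 0)) :=
        tendsto_const_nhds.add (tendsto_const_div_atTop_nhds_zero_nat (d : ℝ))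
      have h2 : Tendsto (fun n : ℕ => ((n : ℝ) + d) / n) atTop (𝓝 1) := by
        rw [add_zero] at this
        refine this.congr' ?_
        filter_upwards [eventually_gt_atTop 0] with n hn
        have : (n : ℝ) ≠ 0 := by positivity
        field_simp
      simpa using h2.pow d
    refine tendsto_of_tendsto_of_tendsto_of_le_of_le' tendsto_const_nhds hup ?_ ?_
    · filter_upwards [eventually_gt_atTop 0] with n hn
      have hpos : (0 : ℝ) < (n : ℝ) ^ d := by positivity
      rw [le_div_iff₀ hpos, one_mul]
      have := Nat.pow_succ_le_ascFactorial (n + 1) d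
      rw [Nat.ascFactorial_eq_factorial_mul_choose] at this
      have h3 : n ^ d ≤ d.factorial * (n + d).choose d := by
        refine le_trans (Nat.pow_le_pow_left (Nat.le_succ n) d) ?_
        simpa using this
      exact_mod_cast h3
    · filter_upwards [eventually_gt_atTop 0] with n hn
      rw [div_pow]
      have hpos : (0 : ℝ) < (n : ℝ) ^ d := by positivity
      rw [div_le_div_iff_of_pos_right hpos]
      have := Nat.ascFactorial_le_pow_add n d
      rw [Nat.ascFactorial_eq_factorial_mul_choose] at this
      exact_mod_cast this
  have := he.div h1 one_ne_zero
  rw [div_one] at this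
  refine this.congr' ?_
  filter_upwards [eventually_gt_atTop 0] with n hn
  have h0 : (n : ℝ) ^ d ≠ 0 := by positivity
  have h2 : (d.factorial : ℝ) ≠ 0 := by positivity
  have h3 : ((n + d).choose d : ℝ) ≠ 0 := by
    have : 0 < (n + d).choose d := Nat.choose_pos (by omega)
    positivity
  simp only [Pi.div_apply]
  field_simp

lemma abel_summable (d : ℕ) (S : ℕ → ℝ) (e : ℝ)
    (he : Tendsto (fun n : ℕ => S n / ((n + d).choose d : ℝ)) atTop (𝓝 e))
    (z : ℝ) (hz : |z| < 1) : Summable fun n => S n * z ^ n := by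
  obtain ⟨C, hC⟩ := he.bddAbove_range.exists_ge 0 |>.imp fun _ h => h
  obtain ⟨C', hC'⟩ := he.bddBelow_range
  have hb := (summable_choose_mul_geometric_of_norm_lt_one d (r := |z|) (by simpa using hz))
  refine Summable.of_norm_bounded (g := fun n => (|C| + |C'|) * (((n + d).choose d : ℝ) * |z| ^ n))
    (hb.mul_left _) ?_
  intro n
  have hpos : (0 : ℝ) < ((n + d).choose d : ℝ) := by
    have : 0 < (n + d).choose d := Nat.choose_pos (by omega)
    positivity
  rw [norm_mul, norm_pow, Real.norm_eq_abs, Real.norm_eq_abs, ← mul_assoc]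
  gcongr
  have h1 : S n / ((n + d).choose d : ℝ) ≤ C := hC.2 _ ⟨n, rfl⟩
  have h2 : C' ≤ S n / ((n + d).choose d : ℝ) := hC' ⟨n, rfl⟩
  rw [← div_le_iff₀ hpos, ← abs_of_pos hpos, ← abs_div]
  rw [abs_le]
  constructor
  · linarith [neg_abs_le C', abs_nonneg C]
  · linarith [le_abs_self C, abs_nonneg C']

lemma abel_limit (d : ℕ) (S : ℕ → ℝ) (e : ℝ)
    (he : Tendsto (fun n : ℕ => S n / ((n + d).choose d : ℝ)) atTop (𝓝 e)) :
    Tendsto (fun z : ℝ => (1 - z) ^ (d + 1) * ∑' n, S n * z ^ n) (𝓝[<] 1) (𝓝 e) := by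
  have hpos : ∀ n : ℕ, (0 : ℝ) < ((n + d).choose d : ℝ) := fun n => by
    have : 0 < (n + d).choose d := Nat.choose_pos (by omega)
    positivity
  rw [Metric.tendsto_nhds]
  intro ε hε
  obtain ⟨M, hM⟩ := (Metric.tendsto_atTop.1 he) (ε / 2) (half_pos hε)
  set K : ℝ := ∑ n ∈ Finset.range M, |S n - e * ((n + d).choose d : ℝ)| with hK
  have hlim : Tendsto (fun z : ℝ => K * (1 - z) ^ (d + 1)) (𝓝[<] 1) (𝓝 0) := by
    have : Continuous fun z : ℝ => K * (1 - z) ^ (d + 1) := by fun_prop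
    have := (this.tendsto 1).mono_left (nhdsWithin_le_nhds (s := Set.Iio 1))
    simpa using this
  have hIoo : Set.Ioo (0 : ℝ) 1 ∈ 𝓝[<] (1 : ℝ) := Ioo_mem_nhdsLT one_pos
  filter_upwards [hIoo, hlim.eventually (gt_mem_nhds (half_pos hε))] with z hz hz2
  have hz0 := hz.1
  have hz1 := hz.2
  have hzabs : |z| < 1 := by rw [abs_of_pos hz0]; exact hz1
  have hsS := abel_summable d S e he z hzabs
  have hsB := hasSum_choose_mul_geometric_of_norm_lt_one d (r := z) (by simpa using hzabs)
  have hw : (0 : ℝ) < (1 - z) ^ (d + 1) := by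
    have : 0 < 1 - z := by linarith
    positivity
  set T : ℕ → ℝ := fun n => (S n - e * ((n + d).choose d : ℝ)) * z ^ n with hT
  have hsT : HasSum T (∑' n, S n * z ^ n - e * (1 / (1 - z) ^ (d + 1))) := by
    convert! hsS.hasSum.sub (hsB.mul_left e) using 2
    simp only [hT]; ring
  -- bound
  set U : ℕ → ℝ := fun n => (if n < M then |S n - e * ((n + d).choose d : ℝ)| else 0) +
    ε / 2 * (((n + d).choose d : ℝ) * z ^ n) with hU
  have hsU : HasSum U (K + ε / 2 * (1 / (1 - z) ^ (d + 1))) := by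
    refine HasSum.add ?_ (hsB.mul_left _)
    have h5 := hasSum_sum_of_ne_finset_zero (L := SummationFilter.unconditional ℕ) (s := Finset.range M)
      (f := fun n => (if n < M then |S n - e * ((n + d).choose d : ℝ)| else 0))
      (by intro n hn; simp at hn; simp [hn])
    convert! h5 using 1
    rw [hK]
    exact Finset.sum_congr rfl fun n hn => by simp [Finset.mem_range.1 hn]
  have hTU : ∀ n, ‖T n‖ ≤ U n := by
    intro n
    simp only [hT, hU, norm_mul, Real.norm_eq_abs, abs_pow, abs_of_pos hz0]
    split_ifs with hn
    · have : z ^ n ≤ 1 := pow_le_one₀ hz0.le hz1.le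
      have h1 := mul_le_of_le_one_right (abs_nonneg (S n - e * ((n + d).choose d : ℝ))) this
      have h2 : 0 ≤ ε / 2 * (((n + d).choose d : ℝ) * z ^ n) := by
        have := hpos n; positivity
      linarith
    · have h1 := hM n (by omega)
      rw [Real.dist_eq] at h1
      have h2 : |S n - e * ((n + d).choose d : ℝ)| ≤ ε / 2 * ((n + d).choose d : ℝ) := by
        rw [← div_le_iff₀ (hpos n)]
        rw [show (S n / ((n + d).choose d : ℝ) - e) =
          (S n - e * ((n + d).choose d : ℝ)) / ((n + d).choose d : ℝ) by
            field_simp [(hpos n).ne']] at h1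
        rw [abs_div, abs_of_pos (hpos n)] at h1
        exact h1.le
      have := mul_le_mul_of_nonneg_right h2 (pow_nonneg hz0.le n)
      linarith
  have hfin := tsum_of_norm_bounded hsU hTU
  rw [hsT.tsum_eq] at hfin
  rw [Real.dist_eq]
  have h6 : (1 - z) ^ (d + 1) * ∑' n, S n * z ^ n - e =
      (1 - z) ^ (d + 1) * (∑' n, S n * z ^ n - e * (1 / (1 - z) ^ (d + 1))) := by
    field_simp
  rw [h6, abs_mul, abs_of_pos hw]
  rw [Real.norm_eq_abs] at hfin
  have h7 := mul_le_mul_of_nonneg_left hfin hw.le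
  have h8 : (1 - z) ^ (d + 1) * (K + ε / 2 * (1 / (1 - z) ^ (d + 1))) =
      K * (1 - z) ^ (d + 1) + ε / 2 := by field_simp
  linarith

lemma eval_of_mul (P Q : ℂ[X]) (S : ℕ → ℝ)
    (hPQ : (P : PowerSeries ℂ) = PowerSeries.mk (fun n => (S n : ℂ)) * (Q : PowerSeries ℂ))
    (z : ℝ) (hz : Summable fun n => |S n * z ^ n|) :
    P.eval (z : ℂ) = ((∑' n, S n * z ^ n : ℝ) : ℂ) * Q.eval (z : ℂ) := by
  have hpoly : ∀ W : ℂ[X], HasSum (fun n => W.coeff n * (z : ℂ) ^ n) (W.eval (z : ℂ)) := by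
    intro W
    rw [Polynomial.eval_eq_sum_range]
    apply hasSum_sum_of_ne_finset_zero
    intro n hn
    simp at hn
    rw [Polynomial.coeff_eq_zero_of_natDegree_lt (by omega), zero_mul]
  have hSc : Summable fun n => ‖((S n : ℂ) * (z : ℂ) ^ n)‖ := by
    refine hz.congr fun n => ?_
    rw [← Complex.ofReal_pow, ← Complex.ofReal_mul, Complex.norm_real, Real.norm_eq_abs]
  have hQc : Summable fun n => ‖(Q.coeff n * (z : ℂ) ^ n)‖ := by
    apply summable_of_ne_finset_zero (s := Finset.range (Q.natDegree + 1))
    intro n hn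
    simp at hn
    rw [Polynomial.coeff_eq_zero_of_natDegree_lt (by omega), zero_mul, norm_zero]
  have h := tsum_mul_tsum_eq_tsum_sum_antidiagonal_of_summable_norm hSc hQc
  rw [(hpoly Q).tsum_eq] at h
  rw [Complex.ofReal_tsum]
  push_cast
  rw [h, ← (hpoly P).tsum_eq]
  congr 1
  ext n
  have h2 := congrArg (PowerSeries.coeff n) hPQ
  rw [Polynomial.coeff_coe, PowerSeries.coeff_mul] at h2
  rw [h2, Finset.sum_mul]
  refine Finset.sum_congr rfl fun ij hij => ?_
  rw [← Finset.HasAntidiagonal.mem_antidiagonal.1 hij, pow_add, PowerSeries.coeff_mk, Polynomial.coeff_coe]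
  ring

lemma poly_ratio (W D : ℂ[X]) (hD : D ≠ 0) (α : ℝ → ℂ) (hα : Tendsto α (𝓝[<] 1) (𝓝 0))
    (hW : ∀ᶠ z : ℝ in 𝓝[<] 1, W.eval (z : ℂ) = α z * D.eval (z : ℂ))
    (z : ℕ → ℂ) (hz : Tendsto z atTop (𝓝 1)) (hz1 : ∀ᶠ n in atTop, z n ≠ 1) :
    (∀ᶠ n in atTop, D.eval (z n) ≠ 0) ∧
      Tendsto (fun n => W.eval (z n) / D.eval (z n)) atTop (𝓝 0) := by
  obtain ⟨Q, hQ, hQ1⟩ := Polynomial.exists_eq_pow_rootMultiplicity_mul_and_not_dvd D hD 1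
  set m := D.rootMultiplicity 1
  rw [Polynomial.dvd_iff_isRoot, Polynomial.IsRoot.def] at hQ1
  have hQn : ∀ᶠ n in atTop, Q.eval (z n) ≠ 0 :=
    ((Q.continuous.tendsto 1).comp hz).eventually_ne hQ1
  have hDe : ∀ x, D.eval x = (x - 1) ^ m * Q.eval x := by
    intro x; rw [hQ]; simp
  refine ⟨?_, ?_⟩
  · filter_upwards [hQn, hz1] with n h1 h2
    rw [hDe]
    exact mul_ne_zero (pow_ne_zero _ (sub_ne_zero.2 h2)) h1
  by_cases hW0 : W = 0
  · simp [hW0]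
  obtain ⟨V, hV, hV1⟩ := Polynomial.exists_eq_pow_rootMultiplicity_mul_and_not_dvd W hW0 1
  set l := W.rootMultiplicity 1
  rw [Polynomial.dvd_iff_isRoot, Polynomial.IsRoot.def] at hV1
  have hWe : ∀ x, W.eval x = (x - 1) ^ l * V.eval x := by
    intro x; rw [hV]; simp
  have hlm : m < l := by
    by_contra hlm
    push Not at hlm
    apply hV1
    have hc : Tendsto (fun x : ℝ => (x : ℂ)) (𝓝[<] 1) (𝓝 1) :=
      (Complex.continuous_ofReal.tendsto 1).mono_left nhdsWithin_le_nhds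
    have t1 : Tendsto (fun x : ℝ => V.eval (x : ℂ)) (𝓝[<] 1) (𝓝 (V.eval 1)) :=
      (V.continuous.tendsto 1).comp hc
    have t2 : Tendsto (fun x : ℝ => α x * (((x : ℂ) - 1) ^ (m - l) * Q.eval (x : ℂ))) (𝓝[<] 1)
        (𝓝 (0 * ((1 - 1) ^ (m - l) * Q.eval 1))) :=
      hα.mul (((hc.sub tendsto_const_nhds).pow _).mul ((Q.continuous.tendsto 1).comp hc))
    rw [zero_mul] at t2
    refine tendsto_nhds_unique t1 (t2.congr' ?_)
    filter_upwards [hW, self_mem_nhdsWithin] with x hx hx1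
    have hne : ((x : ℂ) - 1) ^ l ≠ 0 := by
      apply pow_ne_zero
      rw [sub_ne_zero]
      exact_mod_cast (ne_of_lt hx1)
    rw [hWe, hDe] at hx
    apply mul_left_cancel₀ hne
    rw [hx, ← Nat.add_sub_of_le hlm, pow_add]
    simp
    ring
  have t3 : Tendsto (fun n => (z n - 1) ^ (l - m) * V.eval (z n) / Q.eval (z n)) atTop
      (𝓝 ((1 - 1) ^ (l - m) * V.eval 1 / Q.eval 1)) :=
    (((hz.sub tendsto_const_nhds).pow _).mul ((V.continuous.tendsto 1).comp hz)).div
      ((Q.continuous.tendsto 1).comp hz) hQ1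
  rw [sub_self, zero_pow (by omega), zero_mul, zero_div] at t3
  refine t3.congr' ?_
  filter_upwards [hQn, hz1] with n h1 h2
  have hne : (z n - 1) ^ m ≠ 0 := pow_ne_zero _ (sub_ne_zero.2 h2)
  rw [hWe, hDe]
  obtain ⟨a, ha⟩ := Nat.exists_eq_add_of_le hlm.le
  rw [ha, pow_add, Nat.add_sub_cancel_left]
  field_simp

theorem analytic_part (h : ℕ → ℝ) (p d : ℕ) (hp : 1 < p) (𝔅 : ℂ[X]) (h𝔅 : 𝔅 ≠ 0) (H : ℕ → ℂ[X])
    (hH : ∀ n, (H n : PowerSeries ℂ) = PowerSeries.mk (fun j => (h j : ℂ)) *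
      ((Polynomial.expand ℂ (p ^ n) 𝔅 : ℂ[X]) : PowerSeries ℂ))
    (e : ℝ) (he : Tendsto (fun n : ℕ => (d.factorial : ℝ) / (n : ℝ) ^ d *
      ∑ j ∈ Finset.range (n + 1), h j) atTop (𝓝 e))
    (y : ℂ) (hy : y ≠ 0) (L : ℂ)
    (hL : Tendsto (fun n : ℕ => (1 / (p : ℂ) ^ n) ^ d *
      (H n).eval (Complex.exp (-Complex.I * y / (p : ℂ) ^ n))) atTop (𝓝 L)) :
    L = e * 𝔅.eval (Complex.exp (-Complex.I * y)) / (Complex.I * y) ^ d := by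
  set S : ℕ → ℝ := fun n => ∑ j ∈ Finset.range (n + 1), h j with hS
  have he' := choose_ratio d S e he
  have hmk : PowerSeries.mk (fun j => (h j : ℂ)) =
      PowerSeries.mk (fun n => (S n : ℂ)) * (1 - PowerSeries.X) := by
    have h1 : PowerSeries.mk (fun n => (S n : ℂ)) =
        PowerSeries.mk (fun j => (h j : ℂ)) * PowerSeries.mk 1 := by
      ext n
      rw [PowerSeries.coeff_mul, Finset.Nat.sum_antidiagonal_eq_sum_range_succ_mk]
      simp [hS]
    rw [h1, mul_assoc, PowerSeries.mk_one_mul_one_sub_eq_one, mul_one]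
  have hH0 : (H 0 : PowerSeries ℂ) = PowerSeries.mk (fun n => (S n : ℂ)) *
      (((1 - X) * 𝔅 : ℂ[X]) : PowerSeries ℂ) := by
    rw [hH 0, hmk]
    simp [mul_assoc]
  have hcross : ∀ n, H n * 𝔅 = H 0 * Polynomial.expand ℂ (p ^ n) 𝔅 := by
    intro n
    rw [← Polynomial.coe_inj]
    rw [Polynomial.coe_mul, Polynomial.coe_mul, hH n, hH 0]
    simp
    ring
  set a : ℝ → ℝ := fun z => (1 - z) ^ (d + 1) * ∑' n, S n * z ^ n with ha
  have hlim : Tendsto a (𝓝[<] 1) (𝓝 e) := abel_limit d S e he'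
  set W : ℂ[X] := H 0 * (1 - X) ^ d - C (e : ℂ) * 𝔅 with hWdef
  have hα : Tendsto (fun z : ℝ => ((a z - e : ℝ) : ℂ)) (𝓝[<] 1) (𝓝 0) := by
    have h1 : Tendsto (fun z : ℝ => a z - e) (𝓝[<] 1) (𝓝 0) := by
      simpa using hlim.sub_const e
    have := (Complex.continuous_ofReal.tendsto 0).comp h1
    rw [Complex.ofReal_zero] at this
    exact this
  have hWα : ∀ᶠ z : ℝ in 𝓝[<] 1, W.eval (z : ℂ) = ((a z - e : ℝ) : ℂ) * 𝔅.eval (z : ℂ) := by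
    have hIoo : Set.Ioo (0 : ℝ) 1 ∈ 𝓝[<] (1 : ℝ) := Ioo_mem_nhdsLT one_pos
    filter_upwards [hIoo] with z hz
    have hzabs : |z| < 1 := by rw [abs_of_pos hz.1]; exact hz.2
    have := eval_of_mul (H 0) _ S hH0 z (abel_summable d S e he' z hzabs).abs
    simp only [hWdef, eval_sub, eval_mul, eval_pow, eval_C, eval_one, eval_X, this, ha]
    push_cast
    ring
  set q : ℕ → ℂ := fun n => (p : ℂ) ^ n with hq
  have hq0 : ∀ n, q n ≠ 0 := fun n => pow_ne_zero _ (by exact_mod_cast (by omega : p ≠ 0))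
  set t : ℕ → ℂ := fun n => -Complex.I * y / q n with ht
  have hIy : Complex.I * y ≠ 0 := mul_ne_zero Complex.I_ne_zero hy
  have htne : ∀ n, t n ≠ 0 := fun n => by
    simp only [ht, neg_mul]
    exact div_ne_zero (neg_ne_zero.2 hIy) (hq0 n)
  have ht0 : Tendsto t atTop (𝓝 0) := by
    rw [tendsto_zero_iff_norm_tendsto_zero]
    have : ∀ n, ‖t n‖ = ‖y‖ * ((p : ℝ)⁻¹) ^ n := by
      intro n
      simp [ht, hq, div_eq_mul_inv]
    simp_rw [this]
    have h2 : Tendsto (fun n : ℕ => ((p : ℝ)⁻¹) ^ n) atTop (𝓝 0) :=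
      tendsto_pow_atTop_nhds_zero_of_lt_one (by positivity)
        (inv_lt_one_of_one_lt₀ (by exact_mod_cast hp))
    simpa using h2.const_mul ‖y‖
  set z : ℕ → ℂ := fun n => Complex.exp (t n) with hz
  have hz1 : Tendsto z atTop (𝓝 1) := by
    have := (Complex.continuous_exp.tendsto 0).comp ht0
    rw [Complex.exp_zero] at this
    exact this
  -- slope
  have hslope : Tendsto (fun n => (z n - 1) / t n) atTop (𝓝 1) := by
    have hd := (Complex.hasDerivAt_exp 0)
    rw [hasDerivAt_iff_tendsto_slope] at hd
    have h3 : Tendsto t atTop (𝓝[≠] 0) :=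
      tendsto_nhdsWithin_iff.2 ⟨ht0, Eventually.of_forall htne⟩
    have := hd.comp h3
    rw [Complex.exp_zero] at this
    refine this.congr fun n => ?_
    simp [slope_def_field, hz]
  have hzne : ∀ᶠ n in atTop, z n ≠ 1 := by
    filter_upwards [hslope.eventually_ne one_ne_zero] with n hn h1
    simp [h1] at hn
  obtain ⟨hDne, hratio⟩ := poly_ratio W 𝔅 h𝔅 _ hα hWα z hz1 hzne
  have hqz : Tendsto (fun n => q n * (1 - z n)) atTop (𝓝 (Complex.I * y)) := by
    have : Tendsto (fun n => (z n - 1) / t n * (Complex.I * y)) atTop (𝓝 (1 * (Complex.I * y))) :=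
      hslope.mul_const _
    rw [one_mul] at this
    refine this.congr fun n => ?_
    have htq : t n * q n = -(Complex.I * y) := by
      simp only [ht]
      rw [div_mul_cancel₀ _ (hq0 n), neg_mul]
    rw [div_mul_eq_mul_div, div_eq_iff (htne n)]
    linear_combination (-(1 - z n)) * htq
  have hprod := hL.mul (hqz.pow d)
  set E := 𝔅.eval (Complex.exp (-Complex.I * y)) with hE
  have hfin : Tendsto (fun n => (W.eval (z n) / 𝔅.eval (z n) + e) * E) atTop (𝓝 ((0 + e) * E)) :=
    (hratio.add_const _).mul_const _
  have heq : L * (Complex.I * y) ^ d = (0 + e) * E := by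
    refine tendsto_nhds_unique hprod (hfin.congr' ?_)
    filter_upwards [hDne] with n hn
    have h1 : (H n).eval (z n) * 𝔅.eval (z n) = (H 0).eval (z n) * E := by
      have := congrArg (fun P => Polynomial.eval (z n) P) (hcross n)
      simp only [eval_mul, Polynomial.expand_eval] at this
      rw [this, hE]
      congr 3
      simp only [hz]
      rw [← Complex.exp_nat_mul]
      congr 1
      simp only [ht, hq]
      have := hq0 n
      simp only [hq] at this
      push_cast
      field_simp
    have h2 : W.eval (z n) = (H 0).eval (z n) * (1 - z n) ^ d - e * 𝔅.eval (z n) := by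
      simp [hWdef]
    have h3 : (H 0).eval (z n) * E / 𝔅.eval (z n) = (H n).eval (z n) := by
      rw [← h1]; field_simp
    have hqn := hq0 n
    change _ = (1 / q n) ^ d * (H n).eval (z n) * (q n * (1 - z n)) ^ d
    rw [← h3, h2, mul_pow, div_pow, one_pow]
    field_simp
    ring
  rw [zero_add] at heq
  rw [eq_div_iff (pow_ne_zero _ hIy), heq]

end Analysis
end FP

namespace FP

section Comp
open DirectSum

variable {k R : Type} [Field k] [CommRing R] [Algebra k R]
variable {M : Type} [AddCommGroup M] [Module k M]
variable (ℳ : ℤ → Submodule k M) [DirectSum.Decomposition ℳ]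

/-- Homogeneous component as a linear map. -/
def cp (j : ℤ) : M →ₗ[k] M :=
  (ℳ j).subtype ∘ₗ DirectSum.component k ℤ (fun i => ℳ i) j ∘ₗ
    (DirectSum.decomposeLinearEquiv ℳ).toLinearMap

lemma cp_apply (j : ℤ) (x : M) : cp ℳ j x = (DirectSum.decompose ℳ x j : M) := rfl

lemma cp_mem (j : ℤ) (x : M) : cp ℳ j x ∈ ℳ j := by
  rw [cp_apply]; exact Subtype.prop _

lemma cp_same {j : ℤ} {x : M} (hx : x ∈ ℳ j) : cp ℳ j x = x := by
  rw [cp_apply, DirectSum.decompose_of_mem_same _ hx]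

lemma cp_ne {i j : ℤ} {x : M} (hx : x ∈ ℳ i) (h : i ≠ j) : cp ℳ j x = 0 := by
  rw [cp_apply, DirectSum.decompose_of_mem_ne _ hx h]

lemma cp_sum (x : M) : ∃ s : Finset ℤ, (∑ j ∈ s, cp ℳ j x = x) ∧ ∀ j ∉ s, cp ℳ j x = 0 := by
  classical
  refine ⟨(DirectSum.decompose ℳ x).support, ?_, ?_⟩
  · exact DirectSum.sum_support_decompose ℳ x
  · intro j hj
    rw [cp_apply]
    simpa using hj

lemma cp_ext {x y : M} (h : ∀ j, cp ℳ j x = cp ℳ j y) : x = y := by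
  rw [← sub_eq_zero]
  obtain ⟨s, hs, -⟩ := cp_sum ℳ (x - y)
  rw [← hs]
  refine Finset.sum_eq_zero fun j _ => ?_
  rw [map_sub, h, sub_self]

lemma cp_mem_of {x : M} {j : ℤ} (h : ∀ i, i ≠ j → cp ℳ i x = 0) : x ∈ ℳ j := by
  have : x = cp ℳ j x := by
    refine cp_ext ℳ fun i => ?_
    by_cases hi : i = j
    · subst hi; rw [cp_same ℳ (cp_mem ℳ _ x)]
    · rw [h i hi, cp_ne ℳ (cp_mem ℳ j x) (Ne.symm hi)]
  rw [this]; exact cp_mem ℳ j x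

/-- Induction on homogeneous elements. -/
lemma cp_ind {P : M → Prop} (h0 : P 0) (hadd : ∀ x y, P x → P y → P (x + y))
    (hh : ∀ j, ∀ x ∈ ℳ j, P x) (x : M) : P x := by
  obtain ⟨s, hs, -⟩ := cp_sum ℳ x
  rw [← hs]
  exact Finset.sum_induction _ P hadd h0 fun j _ => hh j _ (cp_mem ℳ j x)

variable (𝒜 : ℤ → Submodule k R) [Module R M]
  
lemma cp_smul (hℳ : ∀ (a b : ℤ), ∀ r ∈ 𝒜 a, ∀ x ∈ ℳ b, r • x ∈ ℳ (a + b))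
    {a : ℤ} {r : R} (hr : r ∈ 𝒜 a) (x : M) (j : ℤ) :
    cp ℳ j (r • x) = r • cp ℳ (j - a) x := by
  refine cp_ind ℳ (P := fun x => cp ℳ j (r • x) = r • cp ℳ (j - a) x) (by simp)
    (fun x y hx hy => ?_) (fun b x hx => ?_) x
  · rw [smul_add, map_add, map_add, hx, hy, smul_add]
  · by_cases h : a + b = j
    · subst h
      rw [cp_same ℳ (hℳ a b r hr x hx), show a + b - a = b by ring, cp_same ℳ hx]
    · rw [cp_ne ℳ (hℳ a b r hr x hx) h, cp_ne ℳ hx (by omega), smul_zero]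

end Comp

section Ring

variable {k R : Type} [Field k] [CommRing R] [Algebra k R]
variable (𝒜 : ℤ → Submodule k R) [GradedAlgebra 𝒜]

lemma grsmul (a b : ℤ) : ∀ r ∈ 𝒜 a, ∀ x ∈ 𝒜 b, r • x ∈ 𝒜 (a + b) :=
  fun _ hr _ hx => SetLike.mul_mem_graded hr hx

/-- The irrelevant ideal. -/
abbrev mm : Ideal R := Ideal.span {x : R | ∃ t : ℤ, t ≠ 0 ∧ x ∈ 𝒜 t}

variable (hneg : ∀ t : ℤ, t < 0 → 𝒜 t = ⊥)

lemma cp_neg (hneg : ∀ t : ℤ, t < 0 → 𝒜 t = ⊥) {t : ℤ} (ht : t < 0) (x : R) : cp 𝒜 t x = 0 := by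
  have := cp_mem 𝒜 t x
  rw [hneg t ht] at this
  exact this

lemma cp_zero_mul (hneg : ∀ t : ℤ, t < 0 → 𝒜 t = ⊥) (r x : R) :
    cp 𝒜 0 (r * x) = cp 𝒜 0 r * cp 𝒜 0 x := by
  refine cp_ind 𝒜 (P := fun r => cp 𝒜 0 (r * x) = cp 𝒜 0 r * cp 𝒜 0 x) (by simp) 
    (fun r s hr hs => ?_) (fun a r hr => ?_) r
  · rw [add_mul, map_add, map_add, hr, hs, add_mul]
  · have h := cp_smul 𝒜 𝒜 (grsmul 𝒜) hr x 0
    rw [smul_eq_mul, smul_eq_mul] at h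
    rw [h]
    rcases lt_trichotomy a 0 with ha | ha | ha
    · rw [hneg a ha] at hr
      rw [(Submodule.mem_bot k).1 hr]; simp
    · subst ha
      rw [cp_same 𝒜 hr]; simp
    · rw [cp_ne 𝒜 hr (by omega), cp_neg 𝒜 hneg (by omega)]; simp

lemma mem_mm (hneg : ∀ t : ℤ, t < 0 → 𝒜 t = ⊥) (x : R) : x ∈ mm 𝒜 ↔ cp 𝒜 0 x = 0 := by
  constructor
  · intro hx
    refine Submodule.span_induction (p := fun x _ => cp 𝒜 0 x = 0) ?_ (by simp) ?_ ?_ hx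
    · rintro x ⟨t, ht, hx⟩
      exact cp_ne 𝒜 hx ht
    · intro x y _ _ hx hy; rw [map_add, hx, hy, add_zero]
    · intro a x _ hx; rw [smul_eq_mul, cp_zero_mul 𝒜 hneg, hx, mul_zero]
  · intro hx
    obtain ⟨s, hs, -⟩ := cp_sum 𝒜 x
    rw [← hs]
    refine Ideal.sum_mem _ fun j _ => ?_
    by_cases hj : j = 0
    · subst hj; rw [hx]; exact Ideal.zero_mem _
    · exact Ideal.subset_span ⟨j, hj, cp_mem 𝒜 j x⟩

lemma cp_zero_one : cp 𝒜 0 (1 : R) = 1 := cp_same 𝒜 SetLike.GradedOne.one_mem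

lemma exists_scalar (hneg : ∀ t : ℤ, t < 0 → 𝒜 t = ⊥)
    (hzero : ∀ x ∈ 𝒜 0, ∃ c : k, algebraMap k R c = x) (r : R) :
    ∃ c : k, r - algebraMap k R c ∈ mm 𝒜 := by
  obtain ⟨c, hc⟩ := hzero _ (cp_mem 𝒜 0 r)
  refine ⟨c, ?_⟩
  rw [mem_mm 𝒜 hneg, map_sub, hc, cp_same 𝒜 (cp_mem 𝒜 0 r), sub_self]

lemma one_notMem_mm [Nontrivial R] (hneg : ∀ t : ℤ, t < 0 → 𝒜 t = ⊥) : (1 : R) ∉ mm 𝒜 := by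
  rw [mem_mm 𝒜 hneg, cp_zero_one]; exact one_ne_zero

lemma mm_max [Nontrivial R] (hneg : ∀ t : ℤ, t < 0 → 𝒜 t = ⊥)
    (hzero : ∀ x ∈ 𝒜 0, ∃ c : k, algebraMap k R c = x) : (mm 𝒜).IsMaximal := by
  rw [Ideal.isMaximal_iff]
  refine ⟨one_notMem_mm 𝒜 hneg, fun J x hJ hx hxJ => ?_⟩
  obtain ⟨c, hc⟩ := exists_scalar 𝒜 hneg hzero x
  have hc0 : c ≠ 0 := by
    rintro rfl
    simp at hc; exact hx hc
  have h1 : algebraMap k R c ∈ J := by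
    have := J.sub_mem hxJ (hJ hc)
    simpa using this
  have := J.mul_mem_left (algebraMap k R c⁻¹) h1
  rwa [← map_mul, inv_mul_cancel₀ hc0, map_one] at this

/-- powers of `mm` have no components in small degrees. -/
lemma cp_mm_pow (hneg : ∀ t : ℤ, t < 0 → 𝒜 t = ⊥) (N : ℕ) :
    ∀ x ∈ mm 𝒜 ^ N, ∀ j : ℤ, j < N → cp 𝒜 j x = 0 := by
  induction N with
  | zero => intro x _ j hj; exact cp_neg 𝒜 hneg (by simpa using hj) x
  | succ N ih =>
    intro x hx j hj
    rw [pow_succ'] at hx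
    refine Submodule.mul_induction_on hx (fun a ha b hb => ?_) (fun x y hx hy => ?_)
    · obtain ⟨s, hs, -⟩ := cp_sum 𝒜 a
      rw [← hs, Finset.sum_mul, map_sum]
      refine Finset.sum_eq_zero fun t _ => ?_
      have h := cp_smul 𝒜 𝒜 (grsmul 𝒜) (cp_mem 𝒜 t a) b j
      rw [smul_eq_mul, smul_eq_mul] at h
      rw [h]
      rcases lt_trichotomy t 0 with ht | ht | ht
      · rw [cp_neg 𝒜 hneg ht, zero_mul]
      · subst ht; rw [(mem_mm 𝒜 hneg a).1 ha, zero_mul]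
      · rw [ih b hb (j - t) (by push_cast at hj; omega), mul_zero]
    · rw [map_add, hx, hy, add_zero]

lemma quot_pow_finite [Nontrivial R] [Algebra.FiniteType k R]
    (hneg : ∀ t : ℤ, t < 0 → 𝒜 t = ⊥)
    (hzero : ∀ x ∈ 𝒜 0, ∃ c : k, algebraMap k R c = x) (N : ℕ) :
    Module.Finite k (R ⧸ (mm 𝒜 ^ N)) := by
  rw [Module.finite_iff_krullDimLE_zero]
  refine Ring.KrullDimLE.mk₀ fun P hP => ?_
  have hmax := mm_max 𝒜 hneg hzero
  have hsurj := Ideal.Quotient.mk_surjective (I := mm 𝒜 ^ N)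
  have hPc : (P.comap (Ideal.Quotient.mk (mm 𝒜 ^ N))).IsPrime := inferInstance
  have hle : mm 𝒜 ≤ P.comap (Ideal.Quotient.mk (mm 𝒜 ^ N)) := by
    refine hPc.le_of_pow_le (n := N) ?_
    intro x hx
    rw [Ideal.mem_comap, Ideal.Quotient.eq_zero_iff_mem.2 hx]
    exact P.zero_mem
  have heq := hmax.eq_of_le hPc.ne_top hle
  have : (P.comap (Ideal.Quotient.mk (mm 𝒜 ^ N))).IsMaximal := heq ▸ hmax
  rw [← Ideal.map_comap_of_surjective _ hsurj P]
  refine (Ideal.map_eq_top_or_isMaximal_of_surjective _ hsurj this).resolve_left ?_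
  rw [Ideal.map_comap_of_surjective _ hsurj P]
  exact hP.ne_top

lemma piece_finite [Nontrivial R] [Algebra.FiniteType k R]
    (hneg : ∀ t : ℤ, t < 0 → 𝒜 t = ⊥)
    (hzero : ∀ x ∈ 𝒜 0, ∃ c : k, algebraMap k R c = x) (j : ℤ) :
    Module.Finite k (𝒜 j) := by
  have := quot_pow_finite 𝒜 hneg hzero (j.toNat + 1)
  refine Module.Finite.of_injective
    ((Ideal.Quotient.mkₐ k (mm 𝒜 ^ (j.toNat + 1))).toLinearMap ∘ₗ (𝒜 j).subtype) ?_
  rw [← LinearMap.ker_eq_bot, LinearMap.ker_eq_bot']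
  rintro ⟨x, hx⟩ h
  have h : Ideal.Quotient.mk (mm 𝒜 ^ (j.toNat + 1)) x = 0 := h
  rw [Ideal.Quotient.eq_zero_iff_mem] at h
  have := cp_mm_pow 𝒜 hneg _ x h j (by push_cast; have := Int.self_le_toNat j; omega)
  rw [cp_same 𝒜 hx] at this
  exact Subtype.ext this

lemma mm_hom (hneg : ∀ t : ℤ, t < 0 → 𝒜 t = ⊥) {x : R} (hx : x ∈ mm 𝒜) (j : ℤ) :
    cp 𝒜 j x ∈ mm 𝒜 := by
  rw [mem_mm 𝒜 hneg] at *
  by_cases hj : j = 0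
  · subst hj; rw [hx, map_zero]
  · exact cp_ne 𝒜 (cp_mem 𝒜 j x) hj

lemma mm_pow_hom (hneg : ∀ t : ℤ, t < 0 → 𝒜 t = ⊥) (N : ℕ) :
    ∀ x ∈ mm 𝒜 ^ N, ∀ j : ℤ, cp 𝒜 j x ∈ mm 𝒜 ^ N := by
  induction N with
  | zero => intro x _ j; simp
  | succ N ih =>
    intro x hx j
    rw [pow_succ'] at hx
    refine Submodule.mul_induction_on hx (fun a ha b hb => ?_) (fun x y hx hy => ?_)
    · obtain ⟨s, hs, -⟩ := cp_sum 𝒜 a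
      rw [← hs, Finset.sum_mul, map_sum]
      refine Ideal.sum_mem _ fun t _ => ?_
      have h := cp_smul 𝒜 𝒜 (grsmul 𝒜) (cp_mem 𝒜 t a) b j
      rw [smul_eq_mul, smul_eq_mul] at h
      rw [h, pow_succ']
      exact Ideal.mul_mem_mul (mm_hom 𝒜 hneg ha t) (ih b hb _)
    · rw [map_add]; exact Ideal.add_mem _ hx hy

lemma large_mem_pow [Nontrivial R] [Algebra.FiniteType k R]
    (hneg : ∀ t : ℤ, t < 0 → 𝒜 t = ⊥)
    (hzero : ∀ x ∈ 𝒜 0, ∃ c : k, algebraMap k R c = x) (N : ℕ) :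
    ∃ T : ℤ, ∀ j, T ≤ j → ∀ x ∈ 𝒜 j, x ∈ mm 𝒜 ^ N := by
  classical
  have := quot_pow_finite 𝒜 hneg hzero N
  obtain ⟨s, hs⟩ := (Module.Finite.fg_top (R := k) (M := R ⧸ (mm 𝒜 ^ N)))
  have hsurj := Ideal.Quotient.mk_surjective (I := mm 𝒜 ^ N)
  choose g hg using hsurj
  choose S hS hS' using fun z => cp_sum 𝒜 (g z)
  have key : ∃ T : ℤ, ∀ z ∈ s, ∀ j, T ≤ j → cp 𝒜 j (g z) = 0 := by
    obtain ⟨T, hT⟩ := (s.biUnion S).bddAbove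
    refine ⟨T + 1, fun z hz j hj => hS' z j fun hj' => ?_⟩
    have : j ≤ T := hT (Finset.mem_coe.2 (Finset.mem_biUnion.2 ⟨z, hz, hj'⟩))
    omega
  obtain ⟨T, hT⟩ := key
  refine ⟨T, fun j hj x hx => ?_⟩
  let W : Submodule k (R ⧸ (mm 𝒜 ^ N)) :=
    ((LinearMap.ker (cp 𝒜 j)).map (Ideal.Quotient.mkₐ k (mm 𝒜 ^ N)).toLinearMap)
  have hW : ⊤ ≤ W := by
    rw [← hs, Submodule.span_le]
    intro z hz
    exact ⟨g z, hT z hz j hj, hg z⟩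
  obtain ⟨w, hw, hwx⟩ := hW (Submodule.mem_top (x := Ideal.Quotient.mk _ x))
  have hwx : Ideal.Quotient.mk (mm 𝒜 ^ N) w = Ideal.Quotient.mk _ x := hwx
  rw [Ideal.Quotient.eq] at hwx
  have := mm_pow_hom 𝒜 hneg N _ hwx j
  rw [map_sub, LinearMap.mem_ker.1 hw, cp_same 𝒜 hx, zero_sub] at this
  simpa using this

lemma mm_le_radical (hneg : ∀ t : ℤ, t < 0 → 𝒜 t = ⊥) (I : Ideal R)
    (hI : Ideal.IsHomogeneous 𝒜 I) (hfl : IsFiniteLength R (R ⧸ I)) :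
    mm 𝒜 ≤ I.radical := by
  refine Ideal.span_le.2 ?_
  rintro x ⟨t, ht, hx⟩
  rcases lt_or_gt_of_ne ht with ht | ht
  · rw [hneg t ht] at hx
    rw [(Submodule.mem_bot k).1 hx]; exact Ideal.zero_mem _
  have : IsArtinian R (R ⧸ I) := (isFiniteLength_iff_isNoetherian_isArtinian.1 hfl).2
  obtain ⟨n, z, hz⟩ := IsArtinian.exists_pow_succ_smul_dvd x (Ideal.Quotient.mk I 1)
  obtain ⟨r, rfl⟩ := Ideal.Quotient.mk_surjective z
  refine ⟨n, ?_⟩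
  have h1 : x ^ (n + 1) * r - x ^ n ∈ I := by
    rw [← Ideal.Quotient.eq]
    have hz' : Ideal.Quotient.mk I (x ^ (n + 1) * r) = Ideal.Quotient.mk I (x ^ n * 1) := hz
    rw [hz', mul_one]
  have hxn : ∀ m : ℕ, x ^ m ∈ 𝒜 (m * t) := fun m => by
    have := SetLike.pow_mem_graded m hx
    simpa using this
  have h2 := hI (n * t) h1
  rw [← cp_apply, map_sub, cp_same 𝒜 (hxn n)] at h2
  have h3 := cp_smul 𝒜 𝒜 (grsmul 𝒜) (hxn (n + 1)) r (n * t)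
  rw [smul_eq_mul, smul_eq_mul, cp_neg 𝒜 hneg (t := n * t - (n + 1 : ℕ) * t) (by push_cast; nlinarith), mul_zero] at h3
  rw [h3, zero_sub] at h2
  simpa using h2

end Ring
end FP

namespace FP

section GrMod

variable {k R : Type} [Field k] [CommRing R] [Algebra k R]
variable (𝒜 : ℤ → Submodule k R) [GradedAlgebra 𝒜]
variable {F : Type} [AddCommGroup F] [Module R F] [Module k F] [IsScalarTower k R F]
variable (ℱ : ℤ → Submodule k F) [DirectSum.Decomposition ℱ]

lemma cp_smul_right (hℱ : ∀ (a b : ℤ), ∀ r ∈ 𝒜 a, ∀ x ∈ ℱ b, r • x ∈ ℱ (a + b))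
    {b : ℤ} {y : F} (hy : y ∈ ℱ b) (r : R) (j : ℤ) :
    cp ℱ j (r • y) = cp 𝒜 (j - b) r • y := by
  refine cp_ind 𝒜 (P := fun r => cp ℱ j (r • y) = cp 𝒜 (j - b) r • y) (by simp)
    (fun r s hr hs => ?_) (fun a r hr => ?_) r
  · rw [add_smul, map_add, map_add, hr, hs, add_smul]
  · rw [cp_smul ℱ 𝒜 hℱ hr]
    by_cases h : a = j - b
    · subst h
      rw [cp_same 𝒜 hr, show j - (j - b) = b by ring, cp_same ℱ hy]
    · rw [cp_ne 𝒜 hr h, cp_ne ℱ hy (by omega), smul_zero, zero_smul]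

lemma exists_hom_basis [Nontrivial R] (hneg : ∀ t : ℤ, t < 0 → 𝒜 t = ⊥)
    (hzero : ∀ x ∈ 𝒜 0, ∃ c : k, algebraMap k R c = x)
    (hℱ : ∀ (a b : ℤ), ∀ r ∈ 𝒜 a, ∀ x ∈ ℱ b, r • x ∈ ℱ (a + b))
    [Module.Free R F] [Module.Finite R F] :
    ∃ (n : ℕ) (deg : Fin n → ℤ) (bas : Module.Basis (Fin n) R F), ∀ i, bas i ∈ ℱ (deg i) := by
  classical
  let Q := F ⧸ (mm 𝒜 • ⊤ : Submodule R F)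
  let π : F →ₗ[R] Q := (mm 𝒜 • ⊤ : Submodule R F).mkQ
  let πk : F →ₗ[k] Q := π.restrictScalars k
  have hπsurj : Function.Surjective π := Submodule.mkQ_surjective _
  have hrs : ∀ (r : R) (c : k), r - algebraMap k R c ∈ mm 𝒜 → ∀ x : F,
      π (r • x) = c • π x := by
    intro r c hc x
    have h1 : π ((r - algebraMap k R c) • x) = 0 := by
      rw [Submodule.mkQ_apply, Submodule.Quotient.mk_eq_zero]
      exact Submodule.smul_mem_smul hc trivial
    rw [sub_smul, map_sub, algebraMap_smul, sub_eq_zero] at h1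
    rw [h1]
    exact πk.map_smul c x
  -- finite-dimensionality
  let B := Module.Free.chooseBasis R F
  have hBspan : (⊤ : Submodule k Q) ≤ Submodule.span k (Set.range fun i => π (B i)) := by
    intro z _
    obtain ⟨x, rfl⟩ := hπsurj z
    rw [← B.sum_repr x, map_sum]
    refine Submodule.sum_mem _ fun i _ => ?_
    obtain ⟨c, hc⟩ := exists_scalar 𝒜 hneg hzero (B.repr x i)
    rw [hrs _ c hc]
    exact Submodule.smul_mem _ _ (Submodule.subset_span ⟨i, rfl⟩)
  have hfin : Module.Finite k Q :=
    ⟨⟨Finset.univ.image fun i => π (B i), by simpa using hBspan⟩⟩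
  have hle : Module.finrank k Q ≤ Module.finrank R F := by
    rw [Module.finrank_eq_card_chooseBasisIndex R F]
    have := finrank_range_le_card (R := k) (fun i => π (B i))
    rwa [Set.finrank, top_le_iff.1 hBspan, finrank_top] at this
  -- homogeneous spanning set
  let S : Set Q := {z | ∃ j, ∃ x ∈ ℱ j, π x = z}
  have hS : Submodule.span k S = ⊤ := by
    rw [eq_top_iff]
    intro z _
    obtain ⟨x, rfl⟩ := hπsurj z
    obtain ⟨s, hs, -⟩ := cp_sum ℱ x
    rw [← hs, map_sum]
    exact Submodule.sum_mem _ fun j _ => Submodule.subset_span ⟨j, _, cp_mem ℱ j x, rfl⟩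
  obtain ⟨b, hbS, hbspan, hbli⟩ := exists_linearIndependent k S
  have hbfin : Finite b := hbli.finite
  have : Fintype b := Fintype.ofFinite b
  choose deg x hx hπx using fun v : b => hbS v.2
  have hcard : Fintype.card b ≤ Module.finrank R F := by
    refine le_trans ?_ hle
    exact hbli.fintype_card_le_finrank
  have hspan : ⊤ ≤ Submodule.span R (Set.range x) := by
    have h1 : (⊤ : Submodule R F) ≤ Submodule.span R (Set.range x) ⊔ mm 𝒜 • ⊤ := by
      intro f _
      have h2 : π f ∈ Submodule.span k b := by rw [hbspan, hS]; trivial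
      have h3 : Submodule.span k b ≤ ((Submodule.span R (Set.range x)).map π).restrictScalars k := by
        rw [Submodule.span_le]
        intro v hv
        exact ⟨x ⟨v, hv⟩, Submodule.subset_span ⟨⟨v, hv⟩, rfl⟩, hπx ⟨v, hv⟩⟩
      obtain ⟨g, hg, hgf⟩ := h3 h2
      have h4 : f - g ∈ (mm 𝒜 • ⊤ : Submodule R F) := by
        rw [← Submodule.Quotient.mk_eq_zero, ← Submodule.mkQ_apply, map_sub]
        exact sub_eq_zero.2 hgf.symm
      rw [show f = g + (f - g) by abel]
      exact Submodule.add_mem_sup hg h4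
    obtain ⟨s, hs, hsle⟩ := Submodule.exists_sub_one_mem_and_smul_le_of_fg_of_le_sup
      (Module.Finite.fg_top (R := R) (M := F)) le_top h1
    have hs0 : cp 𝒜 0 s = 1 := by
      have := (mem_mm 𝒜 hneg _).1 hs
      rwa [map_sub, cp_zero_one, sub_eq_zero] at this
    have hhom : ∀ z ∈ Submodule.span R (Set.range x), ∀ j,
        cp ℱ j z ∈ Submodule.span R (Set.range x) := by
      intro z hz j
      rw [Submodule.mem_span_range_iff_exists_fun] at hz
      obtain ⟨c, rfl⟩ := hz
      rw [map_sum]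
      refine Submodule.sum_mem _ fun i _ => ?_
      rw [cp_smul_right 𝒜 ℱ hℱ (hx i)]
      exact Submodule.smul_mem _ _ (Submodule.subset_span ⟨i, rfl⟩)
    intro f _
    obtain ⟨t, ht, -⟩ := cp_sum ℱ f
    rw [← ht]
    refine Submodule.sum_mem _ fun j _ => ?_
    have h5 := hhom (s • cp ℱ j f) (hsle (Submodule.smul_mem_pointwise_smul _ _ _ trivial)) j
    rwa [cp_smul_right 𝒜 ℱ hℱ (cp_mem ℱ j f), sub_self, hs0, one_smul] at h5
  have hli : LinearIndependent R x := linearIndependent_of_top_le_span_of_card_le_finrank hspan hcard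
  let e := Fintype.equivFin b
  refine ⟨_, fun i => deg (e.symm i), (Module.Basis.mk hli hspan).reindex e, fun i => ?_⟩
  simpa using hx (e.symm i)

variable {ι : Type} [Fintype ι] [DecidableEq ι] (deg : ι → ℤ) (bas : Module.Basis ι R F)

lemma repr_cp (hℱ : ∀ (a b : ℤ), ∀ r ∈ 𝒜 a, ∀ x ∈ ℱ b, r • x ∈ ℱ (a + b))
    (hbas : ∀ i, bas i ∈ ℱ (deg i)) (x : F) (j : ℤ) (i : ι) :
    bas.repr (cp ℱ j x) i = cp 𝒜 (j - deg i) (bas.repr x i) := by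
  have h : cp ℱ j x = ∑ i, cp 𝒜 (j - deg i) (bas.repr x i) • bas i := by
    conv_lhs => rw [← bas.sum_repr x]
    rw [map_sum]
    exact Finset.sum_congr rfl fun i _ => cp_smul_right 𝒜 ℱ hℱ (hbas i) _ _
  rw [h, bas.repr_sum_self]

lemma repr_mem (hℱ : ∀ (a b : ℤ), ∀ r ∈ 𝒜 a, ∀ x ∈ ℱ b, r • x ∈ ℱ (a + b))
    (hbas : ∀ i, bas i ∈ ℱ (deg i)) {x : F} {j : ℤ} (hx : x ∈ ℱ j) (i : ι) :
    bas.repr x i ∈ 𝒜 (j - deg i) := by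
  have := repr_cp 𝒜 ℱ deg bas hℱ hbas x j i
  rw [cp_same ℱ hx] at this
  rw [this]; exact cp_mem _ _ _

lemma mem_smul_top (J : Ideal R) (x : F) :
    x ∈ (J • ⊤ : Submodule R F) ↔ ∀ i, bas.repr x i ∈ J := by
  constructor
  · intro hx i
    refine Submodule.smul_induction_on hx (fun r hr y _ => ?_) (fun x y hx hy => ?_)
    · rw [map_smul, Finsupp.smul_apply, smul_eq_mul]
      exact J.mul_mem_right _ hr
    · rw [map_add, Finsupp.add_apply]; exact J.add_mem hx hy
  · intro h
    rw [← bas.sum_repr x]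
    exact Submodule.sum_mem _ fun i _ => Submodule.smul_mem_smul (h i) trivial

/-- dimension of the degree `j` piece of `F/𝔪F`. -/
lemma finrank_piece_quot [Nontrivial R] (hneg : ∀ t : ℤ, t < 0 → 𝒜 t = ⊥)
    (hzero : ∀ x ∈ 𝒜 0, ∃ c : k, algebraMap k R c = x)
    (hℱ : ∀ (a b : ℤ), ∀ r ∈ 𝒜 a, ∀ x ∈ ℱ b, r • x ∈ ℱ (a + b))
    (hbas : ∀ i, bas i ∈ ℱ (deg i)) (j : ℤ) :
    Module.Finite k ((ℱ j).map ((mm 𝒜 • ⊤ : Submodule R F).mkQ.restrictScalars k)) ∧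
    Module.finrank k ((ℱ j).map ((mm 𝒜 • ⊤ : Submodule R F).mkQ.restrictScalars k)) =
      (Finset.univ.filter fun i => deg i = j).card := by
  let π := (mm 𝒜 • ⊤ : Submodule R F).mkQ.restrictScalars k
  have hπ0 : ∀ x, π x = 0 ↔ ∀ i, bas.repr x i ∈ mm 𝒜 := fun x => by
    rw [← mem_smul_top bas]
    exact Submodule.Quotient.mk_eq_zero _
  let v : {i // deg i = j} → F ⧸ (mm 𝒜 • ⊤ : Submodule R F) := fun i => π (bas i)
  have hspan : (ℱ j).map π = Submodule.span k (Set.range v) := by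
    apply le_antisymm
    · rintro _ ⟨x, hx, rfl⟩
      conv => enter [2]; rw [← bas.sum_repr x]
      rw [map_sum]
      refine Submodule.sum_mem _ fun i _ => ?_
      have hr := repr_mem 𝒜 ℱ deg bas hℱ hbas hx i
      by_cases hi : deg i = j
      · rw [hi, sub_self] at hr
        obtain ⟨c, hc⟩ := hzero _ hr
        rw [← hc, algebraMap_smul, map_smul]
        exact Submodule.smul_mem _ _ (Submodule.subset_span ⟨⟨i, hi⟩, rfl⟩)
      · have : π (bas.repr x i • bas i) = 0 := by
          refine (Submodule.Quotient.mk_eq_zero _).2 (Submodule.smul_mem_smul ?_ trivial)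
          exact Ideal.subset_span ⟨_, by omega, hr⟩
        rw [this]; exact Submodule.zero_mem _
    · rw [Submodule.span_le]
      rintro _ ⟨⟨i, rfl⟩, rfl⟩
      exact ⟨bas i, hbas i, rfl⟩
  have hli : LinearIndependent k v := by
    rw [Fintype.linearIndependent_iff]
    intro g hg i
    have h1 : π (∑ i : {i // deg i = j}, algebraMap k R (g i) • bas i.1) = 0 := by
      rw [map_sum, ← hg]
      refine Finset.sum_congr rfl fun i _ => ?_
      rw [algebraMap_smul, map_smul]
    have h2 := (hπ0 _).1 h1 i.1
    rw [map_sum, Finsupp.finsetSum_apply, Finset.sum_eq_single i] at h2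
    · rw [map_smul, Finsupp.smul_apply, bas.repr_self, Finsupp.single_eq_same, smul_eq_mul,
        mul_one] at h2
      by_contra hgi
      refine (mm_max 𝒜 hneg hzero).ne_top (Ideal.eq_top_of_isUnit_mem _ h2 ?_)
      exact (isUnit_iff_ne_zero.2 hgi).map _
    · intro i' _ hne
      rw [map_smul, Finsupp.smul_apply, bas.repr_self, Finsupp.single_eq_of_ne, smul_zero]
      intro h; exact hne (Subtype.ext h.symm)
    · simp
  change Module.Finite k ((ℱ j).map π) ∧ Module.finrank k ((ℱ j).map π) = _
  rw [hspan]
  refine ⟨Module.Finite.span_of_finite _ (Set.finite_range v), ?_⟩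
  rw [finrank_span_eq_card hli, Fintype.card_subtype]

end GrMod
end FP

namespace FP

lemma rank_null {k E E' : Type} [Field k] [AddCommGroup E] [Module k E] [AddCommGroup E']
    [Module k E'] (V : Submodule k E) [Module.Finite k V] (f : E →ₗ[k] E') :
    Module.finrank k (V.map f) + Module.finrank k (V ⊓ LinearMap.ker f : Submodule k E) =
      Module.finrank k V := by
  rw [← LinearMap.finrank_range_add_finrank_ker (f.domRestrict V), LinearMap.range_domRestrict,
    LinearMap.ker_domRestrict, ← Submodule.map_comap_subtype]
  congr 1
  exact (LinearEquiv.finrank_eq (Submodule.equivMapOfInjective V.subtype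
    V.injective_subtype _)).symm

lemma alt_sum_lemma (v z b : ℕ → ℂ) (h0 : z 0 = v 0) (h : ∀ i, v (i + 1) = b i + z (i + 1))
    (n : ℕ) : ∑ i ∈ Finset.range (n + 1), (-1 : ℂ) ^ i * (z i - b i) =
      ∑ i ∈ Finset.range (n + 1), (-1 : ℂ) ^ i * v i - (-1) ^ n * b n := by
  induction n with
  | zero => simp [h0]
  | succ n ih =>
    rw [Finset.sum_range_succ, ih, Finset.sum_range_succ _ (n + 1), h n, pow_succ]
    ring

lemma alt_sum_lemma' (g b : ℕ → ℂ) (r : ℂ) (h0 : g 0 = r + b 0)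
    (h : ∀ i, g (i + 1) = b i + b (i + 1))
    (n : ℕ) : ∑ i ∈ Finset.range (n + 1), (-1 : ℂ) ^ i * g i = r + (-1) ^ n * b n := by
  induction n with
  | zero => simp [h0]
  | succ n ih =>
    rw [Finset.sum_range_succ, ih, h n, pow_succ]
    ring

section Tor
variable {k R : Type} [Field k] [CommRing R] [Algebra k R]
variable (𝒜 : ℤ → Submodule k R) [GradedAlgebra 𝒜]

lemma torAltSum_eq [Nontrivial R] (hneg : ∀ t : ℤ, t < 0 → 𝒜 t = ⊥)
    (hzero : ∀ x ∈ 𝒜 0, ∃ c : k, algebraMap k R c = x)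
    (F : ℕ → Type) [∀ i, AddCommGroup (F i)] [∀ i, Module R (F i)]
    [∀ i, Module k (F i)] [∀ i, IsScalarTower k R (F i)]
    (ℱ : ∀ i, ℤ → Submodule k (F i)) [∀ i, DirectSum.Decomposition (ℱ i)]
    (hℱ : ∀ (i : ℕ) (a b : ℤ), ∀ r ∈ 𝒜 a, ∀ x ∈ ℱ i b, r • x ∈ ℱ i (a + b))
    (dF : ∀ i, F (i + 1) →ₗ[R] F i)
    (hdFdeg : ∀ (i : ℕ) (t : ℤ), ∀ x ∈ ℱ (i + 1) t, dF i x ∈ ℱ i t)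
    (hdd : ∀ i x, dF i (dF (i + 1) x) = 0)
    (ℓ : ℕ) (hfinres : ∀ i : ℕ, ℓ < i → Subsingleton (F i))
    (c : ℕ → Type) [∀ i, Fintype (c i)] [∀ i, DecidableEq (c i)]
    (deg : ∀ i, c i → ℤ) (bas : ∀ i, Module.Basis (c i) R (F i))
    (hbas : ∀ i x, bas i x ∈ ℱ i (deg i x)) (j : ℤ) :
    torAltSum k F ℱ dF (mm 𝒜) j =
      ∑ α ∈ Finset.range (ℓ + 1), (-1 : ℂ) ^ α *
        ((Finset.univ.filter fun x => deg α x = j).card : ℂ) := by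
  let π : ∀ i, F i →ₗ[k] F i ⧸ (mm 𝒜 • ⊤ : Submodule R (F i)) := fun i =>
    (mm 𝒜 • ⊤ : Submodule R (F i)).mkQ.restrictScalars k
  let V : ∀ i, Submodule k (F i ⧸ (mm 𝒜 • ⊤ : Submodule R (F i))) := fun i => (ℱ i j).map (π i)
  let D : ∀ i, (F (i + 1) ⧸ (mm 𝒜 • ⊤ : Submodule R (F (i + 1)))) →ₗ[k]
      F i ⧸ (mm 𝒜 • ⊤ : Submodule R (F i)) := fun i =>
    (inducedQuot (mm 𝒜) (dF i)).restrictScalars k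
  have hVfin : ∀ i, Module.Finite k (V i) := fun i =>
    (finrank_piece_quot 𝒜 (ℱ i) (deg i) (bas i) hneg hzero (hℱ i) (hbas i) j).1
  have hVrank : ∀ i, Module.finrank k (V i) = (Finset.univ.filter fun x => deg i x = j).card :=
    fun i => (finrank_piece_quot 𝒜 (ℱ i) (deg i) (bas i) hneg hzero (hℱ i) (hbas i) j).2
  have hDπ : ∀ i x, D i (π (i + 1) x) = π i (dF i x) := fun i x => rfl
  have hcpd : ∀ i x, cp (ℱ i) j (dF i x) = dF i (cp (ℱ (i + 1)) j x) := by
    intro i x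
    refine cp_ind (ℱ (i + 1)) (P := fun x => cp (ℱ i) j (dF i x) = dF i (cp (ℱ (i + 1)) j x))
      (by simp) (fun x y hx hy => ?_) (fun a x hx => ?_) x
    · simp only [map_add, hx, hy]
    · by_cases h : a = j
      · subst h
        rw [cp_same _ hx, cp_same _ (hdFdeg i _ x hx)]
      · rw [cp_ne _ hx h, cp_ne _ (hdFdeg i _ x hx) h, map_zero]
  have hbd : ∀ i, boundariesPiece k F ℱ dF (mm 𝒜) i j = (V (i + 1)).map (D i) := by
    intro i
    apply le_antisymm
    · rintro z ⟨⟨x, hx, hxz⟩, ⟨w, hw⟩⟩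
      obtain ⟨f, rfl⟩ := Submodule.mkQ_surjective _ w
      refine ⟨π (i + 1) (cp (ℱ (i + 1)) j f), ⟨_, cp_mem _ _ _, rfl⟩, ?_⟩
      rw [hDπ, ← hxz]
      have h1 : π i (dF i f) = π i x := hw.trans hxz.symm
      have h2 : x - dF i f ∈ (mm 𝒜 • ⊤ : Submodule R (F i)) := by
        rw [← Submodule.Quotient.mk_eq_zero, ← Submodule.mkQ_apply, map_sub]
        exact sub_eq_zero.2 h1.symm
      have h3 : cp (ℱ i) j (x - dF i f) ∈ (mm 𝒜 • ⊤ : Submodule R (F i)) := by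
        rw [mem_smul_top (bas i)] at h2 ⊢
        intro b
        rw [repr_cp 𝒜 (ℱ i) (deg i) (bas i) (hℱ i) (hbas i)]
        exact mm_hom 𝒜 hneg (h2 b) _
      rw [map_sub, cp_same _ hx, hcpd] at h3
      have h4 : π i (x - dF i (cp (ℱ (i + 1)) j f)) = 0 := (Submodule.Quotient.mk_eq_zero _).2 h3
      rw [map_sub, sub_eq_zero] at h4
      exact h4.symm
    · rintro _ ⟨_, ⟨x, hx, rfl⟩, rfl⟩
      exact ⟨⟨dF i x, hdFdeg i j x hx, rfl⟩, ⟨π (i + 1) x, rfl⟩⟩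
  have hz0 : cyclesPiece k F ℱ dF (mm 𝒜) 0 j = V 0 := rfl
  have hz : ∀ i, cyclesPiece k F ℱ dF (mm 𝒜) (i + 1) j = V (i + 1) ⊓ LinearMap.ker (D i) :=
    fun i => rfl
  have hble : ∀ i, boundariesPiece k F ℱ dF (mm 𝒜) i j ≤ cyclesPiece k F ℱ dF (mm 𝒜) i j := by
    intro i
    cases i with
    | zero => exact inf_le_left
    | succ i =>
      refine le_inf inf_le_left ?_
      rw [hbd]
      rintro _ ⟨_, ⟨x, hx, rfl⟩, rfl⟩
      change D i (D (i + 1) (π (i + 1 + 1) x)) = 0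
      rw [hDπ, hDπ, hdd, map_zero]
  have hzfin : ∀ i, Module.Finite k (cyclesPiece k F ℱ dF (mm 𝒜) i j) := by
    intro i
    cases i with
    | zero => exact hVfin 0
    | succ i =>
      rw [hz]
      have := hVfin (i + 1)
      exact Submodule.finiteDimensional_of_le inf_le_left
  have htor : ∀ i, (torPieceDim k F ℱ dF (mm 𝒜) i j : ℂ) =
      (Module.finrank k (cyclesPiece k F ℱ dF (mm 𝒜) i j) : ℂ) -
      (Module.finrank k (boundariesPiece k F ℱ dF (mm 𝒜) i j) : ℂ) := by
    intro i
    have := hzfin i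
    rw [torPieceDim, Nat.cast_sub (Submodule.finrank_mono (hble i))]
  have hsubs : ∀ i, ℓ < i → ∀ W : Submodule k (F i ⧸ (mm 𝒜 • ⊤ : Submodule R (F i))),
      Module.finrank k W = 0 := by
    intro i hi W
    have := hfinres i hi
    have : Subsingleton (F i ⧸ (mm 𝒜 • ⊤ : Submodule R (F i))) :=
      (Submodule.mkQ_surjective (mm 𝒜 • ⊤ : Submodule R (F i))).subsingleton
    exact Module.finrank_zero_of_subsingleton
  have hbl : Module.finrank k (boundariesPiece k F ℱ dF (mm 𝒜) ℓ j) = 0 := by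
    rw [hbd]
    have := hVfin (ℓ + 1)
    have h1 := rank_null (V (ℓ + 1)) (D ℓ)
    have h2 := hsubs (ℓ + 1) (by omega) (V (ℓ + 1))
    omega
  rw [torAltSum, tsum_eq_sum (s := Finset.range (ℓ + 1))]
  · simp_rw [htor]
    rw [alt_sum_lemma (fun i => ((Finset.univ.filter fun x => deg i x = j).card : ℂ))]
    · rw [hbl]; simp
    · rw [hz0, hVrank]
    · intro i
      have := hVfin (i + 1)
      rw [hbd, hz, ← hVrank, ← Nat.cast_add, rank_null]
  · intro i hi
    have hi : ℓ < i := by simpa using hi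
    rw [torPieceDim, hsubs i hi]; simp

end Tor
end FP

namespace FP

section Count
variable {k R : Type} [Field k] [CommRing R] [Algebra k R]
variable (𝒜 : ℤ → Submodule k R) [GradedAlgebra 𝒜]

/-- Degree `j` piece of the graded free module with generators in degrees `deg`. -/
def Gp {c : Type} (deg : c → ℤ) (j : ℤ) : Submodule k (c → R) :=
  Submodule.pi Set.univ fun b => 𝒜 (j - deg b)

lemma mem_Gp {c : Type} (deg : c → ℤ) (j : ℤ) (v : c → R) :
    v ∈ Gp 𝒜 deg j ↔ ∀ b, v b ∈ 𝒜 (j - deg b) := by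
  simp [Gp, Submodule.mem_pi]

/-- `Gp` as a product. -/
def GpEquiv {c : Type} (deg : c → ℤ) (j : ℤ) : Gp 𝒜 deg j ≃ₗ[k] (∀ b, 𝒜 (j - deg b)) where
  toFun v b := ⟨v.1 b, (mem_Gp 𝒜 deg j v.1).1 v.2 b⟩
  invFun w := ⟨fun b => (w b).1, (mem_Gp 𝒜 deg j _).2 fun b => (w b).2⟩
  map_add' _ _ := rfl
  map_smul' _ _ := rfl
  left_inv _ := rfl
  right_inv _ := rfl

lemma finrank_Gp (hfin : ∀ j, Module.Finite k (𝒜 j)) {c : Type} [Fintype c] (deg : c → ℤ) (j : ℤ) :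
    Module.Finite k (Gp 𝒜 deg j) ∧
    Module.finrank k (Gp 𝒜 deg j) = ∑ b, Module.finrank k (𝒜 (j - deg b)) := by
  refine ⟨Module.Finite.equiv (GpEquiv 𝒜 deg j).symm, ?_⟩
  rw [(GpEquiv 𝒜 deg j).finrank_eq, Module.finrank_pi_fintype]

lemma count (hfin : ∀ j, Module.Finite k (𝒜 j))
    (c : ℕ → Type) [∀ i, Fintype (c i)] (deg : ∀ i, c i → ℤ)
    (M : ∀ i, Matrix (c i) (c (i + 1)) R)
    (hM : ∀ i b b', M i b b' ∈ 𝒜 (deg (i + 1) b' - deg i b))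
    (E : c 0 → R) (hE : ∀ b, E b ∈ 𝒜 (deg 0 b)) (J : Submodule R R)
    (hMM : ∀ i, M i * M (i + 1) = 0)
    (hex : ∀ i v, (M i).mulVec v = 0 → ∃ w, (M (i + 1)).mulVec w = v)
    (hex0 : ∀ v, ∑ b, v b * E b ∈ J ↔ ∃ w, (M 0).mulVec w = v)
    (u : c 0 → R) (hu : ∀ b, u b ∈ 𝒜 (- deg 0 b)) (hu1 : 1 - ∑ b, u b * E b ∈ J)
    (ℓ : ℕ) (hℓ : ∀ i, ℓ < i → IsEmpty (c i)) (j : ℤ) :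
    (Module.finrank k ((𝒜 j).map (J.mkQ.restrictScalars k)) : ℂ) =
      ∑ α ∈ Finset.range (ℓ + 1), (-1 : ℂ) ^ α *
        ∑ b, (Module.finrank k (𝒜 (j - deg α b)) : ℂ) := by
  let D : ∀ i, (c (i + 1) → R) →ₗ[k] (c i → R) := fun i => (M i).mulVecLin.restrictScalars k
  have hD : ∀ i v, D i v = (M i).mulVec v := fun i v => rfl
  let E1 : (c 0 → R) →ₗ[R] R :=
    { toFun := fun v => ∑ b, v b * E b
      map_add' := fun v w => by simp [add_mul, Finset.sum_add_distrib]
      map_smul' := fun r v => by simp [Finset.mul_sum, mul_assoc] }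
  let Eq : (c 0 → R) →ₗ[k] (R ⧸ J) := (J.mkQ ∘ₗ E1).restrictScalars k
  have hEq0 : ∀ v, Eq v = 0 ↔ ∑ b, v b * E b ∈ J := fun v => Submodule.Quotient.mk_eq_zero _
  have hGfin := fun i => (finrank_Gp 𝒜 hfin (deg i) j).1
  have hGr := fun i => (finrank_Gp 𝒜 hfin (deg i) j).2
  -- image of `D`
  have him : ∀ i, (Gp 𝒜 (deg (i + 1)) j).map (D i) =
      Gp 𝒜 (deg i) j ⊓ LinearMap.range (D i) := by
    intro i
    apply le_antisymm
    · rintro _ ⟨v, hv, rfl⟩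
      refine ⟨?_, v, rfl⟩
      rw [SetLike.mem_coe, mem_Gp]
      intro b
      rw [hD]
      refine Submodule.sum_mem _ fun b' _ => ?_
      have := SetLike.mul_mem_graded (hM i b b') ((mem_Gp 𝒜 _ _ _).1 hv b')
      rwa [show deg (i + 1) b' - deg i b + (j - deg (i + 1) b') = j - deg i b by ring] at this
    · rintro v ⟨hv, w, hw⟩
      rw [SetLike.mem_coe, mem_Gp] at hv
      refine ⟨fun b' => cp 𝒜 (j - deg (i + 1) b') (w b'), ?_, ?_⟩
      · rw [SetLike.mem_coe, mem_Gp]; exact fun b' => cp_mem _ _ _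
      · ext b
        rw [← cp_same 𝒜 (hv b), ← hw, hD, hD]
        simp only [Matrix.mulVec, dotProduct]
        rw [map_sum]
        refine Finset.sum_congr rfl fun b' _ => ?_
        have := cp_smul 𝒜 𝒜 (grsmul 𝒜) (hM i b b') (w b') (j - deg i b)
        rw [smul_eq_mul, smul_eq_mul] at this
        rw [this]
        congr 3
        ring
  have hker : ∀ i, LinearMap.ker (D i) = LinearMap.range (D (i + 1)) := by
    intro i
    ext v
    constructor
    · intro hv
      exact hex i v hv
    · rintro ⟨w, rfl⟩
      rw [LinearMap.mem_ker, hD, hD, Matrix.mulVec_mulVec, hMM, Matrix.zero_mulVec]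
  have hker0 : LinearMap.ker Eq = LinearMap.range (D 0) := by
    ext v
    rw [LinearMap.mem_ker, hEq0, hex0]
    rfl
  have him0 : (Gp 𝒜 (deg 0) j).map Eq = (𝒜 j).map (J.mkQ.restrictScalars k) := by
    apply le_antisymm
    · rintro _ ⟨v, hv, rfl⟩
      refine ⟨∑ b, v b * E b, ?_, rfl⟩
      refine Submodule.sum_mem _ fun b _ => ?_
      have := SetLike.mul_mem_graded ((mem_Gp 𝒜 _ _ _).1 hv b) (hE b)
      rwa [sub_add_cancel] at this
    · rintro _ ⟨x, hx, rfl⟩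
      refine ⟨fun b => x * u b, ?_, ?_⟩
      · rw [SetLike.mem_coe, mem_Gp]
        intro b
        exact SetLike.mul_mem_graded hx (hu b)
      · symm
        refine (Submodule.Quotient.eq _).2 ?_
        have := J.smul_mem x hu1
        rw [smul_eq_mul, mul_sub, mul_one, Finset.mul_sum] at this
        simpa only [E1, LinearMap.coe_mk, AddHom.coe_mk, mul_assoc] using this
  let bb : ℕ → ℂ := fun i => (Module.finrank k ((Gp 𝒜 (deg (i + 1)) j).map (D i)) : ℂ)
  have hmain := alt_sum_lemma' (fun i => (Module.finrank k (Gp 𝒜 (deg i) j) : ℂ)) bb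
    (Module.finrank k ((𝒜 j).map (J.mkQ.restrictScalars k)) : ℂ) ?_ ?_ ℓ
  · have hb0 : bb ℓ = 0 := by
      have := hℓ (ℓ + 1) (by omega)
      have h1 := hGfin (ℓ + 1)
      have h2 := rank_null (Gp 𝒜 (deg (ℓ + 1)) j) (D ℓ)
      have h3 := hGr (ℓ + 1)
      rw [Finset.univ_eq_empty, Finset.sum_empty] at h3
      simp only [bb]
      rw [Nat.cast_eq_zero]
      omega
    rw [hb0, mul_zero, add_zero] at hmain
    rw [← hmain]
    refine Finset.sum_congr rfl fun i _ => ?_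
    rw [hGr]; push_cast; rfl
  · have := hGfin 0
    have h := rank_null (Gp 𝒜 (deg 0) j) Eq
    simp only [bb]
    rw [him, ← hker0, ← him0, ← Nat.cast_add, h]
  · intro i
    have := hGfin (i + 1)
    have h := rank_null (Gp 𝒜 (deg (i + 1)) j) (D i)
    simp only [bb]
    rw [him (i + 1), ← hker, ← Nat.cast_add, h]

end Count
end FP

namespace FP

section Res
variable {k R : Type} [Field k] [CommRing R] [Algebra k R]
variable (𝒜 : ℤ → Submodule k R) [GradedAlgebra 𝒜]

lemma lift_range {P N N' : Type} [AddCommGroup P] [Module R P] [Module.Projective R P]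
    [AddCommGroup N] [Module R N] [AddCommGroup N'] [Module R N']
    (d : N →ₗ[R] N') (g : P →ₗ[R] N') (h : ∀ x, g x ∈ LinearMap.range d) :
    ∃ s : P →ₗ[R] N, ∀ x, d (s x) = g x := by
  obtain ⟨s, hs⟩ := Module.projective_lifting_property d.rangeRestrict
    (g.codRestrict (LinearMap.range d) h) d.surjective_rangeRestrict
  refine ⟨s, fun x => ?_⟩
  have := congrArg Subtype.val (LinearMap.congr_fun hs x)
  simpa using this

lemma nullhtpy (I : Ideal R)
    (F : ℕ → Type) [∀ i, AddCommGroup (F i)] [∀ i, Module R (F i)]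
    [∀ i, Module.Free R (F i)]
    (dF : ∀ i, F (i + 1) →ₗ[R] F i) (ε : F 0 →ₗ[R] R ⧸ I)
    (hex0 : LinearMap.range (dF 0) = LinearMap.ker ε)
    (hex : ∀ i : ℕ, LinearMap.range (dF (i + 1)) = LinearMap.ker (dF i))
    (a : R) (ha : a ∈ I) (i : ℕ) :
    ∃ (s : F (i + 1) →ₗ[R] F (i + 2)) (t : F i →ₗ[R] F (i + 1)),
      ∀ x, dF (i + 1) (s x) + t (dF i x) = a • x := by
  have step : ∀ i (t : F i →ₗ[R] F (i + 1)), (∀ y, dF i (t (dF i y)) = a • dF i y) →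
      ∃ s : F (i + 1) →ₗ[R] F (i + 2), ∀ x, dF (i + 1) (s x) + t (dF i x) = a • x := by
    intro i t ht
    obtain ⟨s, hs⟩ := lift_range (dF (i + 1)) (a • LinearMap.id - t ∘ₗ dF i) (fun x => by
      rw [hex, LinearMap.mem_ker]
      simp [ht])
    refine ⟨s, fun x => ?_⟩
    rw [hs]; simp
  have hdd : ∀ i y, dF i (dF (i + 1) y) = 0 := fun i y => by
    have : dF (i + 1) y ∈ LinearMap.ker (dF i) := by rw [← hex]; exact ⟨y, rfl⟩
    exact this
  have main : ∀ i, ∃ t : F i →ₗ[R] F (i + 1), ∀ y, dF i (t (dF i y)) = a • dF i y := by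
    intro i
    induction i with
    | zero =>
      obtain ⟨t, ht⟩ := lift_range (dF 0) (a • LinearMap.id) (fun x => by
        rw [hex0, LinearMap.mem_ker]
        simp only [LinearMap.smul_apply, LinearMap.id_apply, map_smul]
        obtain ⟨r, hr⟩ := Ideal.Quotient.mk_surjective (ε x)
        rw [← hr]
        change Ideal.Quotient.mk I (a * r) = 0
        exact Ideal.Quotient.eq_zero_iff_mem.2 (I.mul_mem_right _ ha))
      exact ⟨t, fun y => by rw [ht]; rfl⟩
    | succ i ih =>
      obtain ⟨t, ht⟩ := ih
      obtain ⟨s, hs⟩ := step i t ht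
      refine ⟨s, fun y => ?_⟩
      have := hs (dF (i + 1) y)
      rwa [hdd, map_zero, add_zero] at this
  obtain ⟨t, ht⟩ := main i
  obtain ⟨s, hs⟩ := step i t ht
  exact ⟨s, t, hs⟩

theorem res_count [Nontrivial R] [Algebra.FiniteType k R]
    (p : ℕ) (hp : p.Prime) [CharP R p]
    (hneg : ∀ t : ℤ, t < 0 → 𝒜 t = ⊥)
    (hzero : ∀ x ∈ 𝒜 0, ∃ c : k, algebraMap k R c = x)
    (I : Ideal R) (hI : Ideal.IsHomogeneous 𝒜 I) (hIfl : IsFiniteLength R (R ⧸ I))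
    (F : ℕ → Type) [∀ i, AddCommGroup (F i)] [∀ i, Module R (F i)]
    [∀ i, Module k (F i)] [∀ i, IsScalarTower k R (F i)]
    [∀ i, Module.Free R (F i)] 
    (ℱ : ∀ i, ℤ → Submodule k (F i)) [∀ i, DirectSum.Decomposition (ℱ i)]
    (hℱ : ∀ (i : ℕ) (a b : ℤ), ∀ r ∈ 𝒜 a, ∀ x ∈ ℱ i b, r • x ∈ ℱ i (a + b))
    (dF : ∀ i, F (i + 1) →ₗ[R] F i) (ε : F 0 →ₗ[R] R ⧸ I)
    (hdFdeg : ∀ (i : ℕ) (t : ℤ), ∀ x ∈ ℱ (i + 1) t, dF i x ∈ ℱ i t)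
    (hεdeg : ∀ t : ℤ, ∀ x ∈ ℱ 0 t,
      ε x ∈ (𝒜 t).map (Ideal.Quotient.mkₐ k I).toLinearMap)
    (hεsurj : Function.Surjective ε)
    (hex0 : LinearMap.range (dF 0) = LinearMap.ker ε)
    (hex : ∀ i : ℕ, LinearMap.range (dF (i + 1)) = LinearMap.ker (dF i))
    (ℓ : ℕ) (hfinres : ∀ i : ℕ, ℓ < i → Subsingleton (F i))
    (c : ℕ → Type) [∀ i, Fintype (c i)] [∀ i, DecidableEq (c i)]
    (deg : ∀ i, c i → ℤ) (bas : ∀ i, Module.Basis (c i) R (F i))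
    (hbas : ∀ i x, bas i x ∈ ℱ i (deg i x)) (n : ℕ) (j : ℤ) :
    (Module.finrank k ((𝒜 j).map
        (((bracketPow I (p ^ n) • ⊤ : Submodule R R)).mkQ.restrictScalars k)) : ℂ) =
      ∑ α ∈ Finset.range (ℓ + 1), (-1 : ℂ) ^ α *
        ∑ b, (Module.finrank k (𝒜 (j - (p ^ n : ℕ) * deg α b)) : ℂ) := by
  classical
  have : IsNoetherianRing R := Algebra.FiniteType.isNoetherianRing k R
  have : ExpChar R p := ExpChar.prime hp
  have hmax := mm_max 𝒜 hneg hzero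
  let q := p ^ n
  let φ : R →+* R := iterateFrobenius R p n
  have hφ : ∀ x, φ x = x ^ q := fun x => iterateFrobenius_def p n x
  have hφdeg : ∀ {x : R} {t : ℤ}, x ∈ 𝒜 t → φ x ∈ 𝒜 (q * t) := by
    intro x t hx
    rw [hφ]
    have := SetLike.pow_mem_graded q hx
    simpa using this
  let J : Ideal R := bracketPow I q
  have hφJ : ∀ {x}, x ∈ I → φ x ∈ J := by
    intro x hx
    rw [hφ]
    exact Ideal.subset_span ⟨x, hx, rfl⟩
  have hdd : ∀ i y, dF i (dF (i + 1) y) = 0 := fun i y => by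
    have : dF (i + 1) y ∈ LinearMap.ker (dF i) := by rw [← hex]; exact ⟨y, rfl⟩
    exact this
  have hcempty : ∀ i, ℓ < i → IsEmpty (c i) := by
    intro i hi
    have := hfinres i hi
    refine ⟨fun x => (bas i).ne_zero x (Subsingleton.elim _ _)⟩
  let A : ∀ i, Matrix (c i) (c (i + 1)) R := fun i => LinearMap.toMatrix (bas (i + 1)) (bas i) (dF i)
  have hAapp : ∀ i b b', A i b b' = (bas i).repr (dF i (bas (i + 1) b')) b := fun i b b' =>
    LinearMap.toMatrix_apply _ _ _ _ _
  have hAdeg : ∀ i b b', A i b b' ∈ 𝒜 (deg (i + 1) b' - deg i b) := by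
    intro i b b'
    rw [hAapp]
    exact repr_mem 𝒜 (ℱ i) (deg i) (bas i) (hℱ i) (hbas i) (hdFdeg i _ _ (hbas _ _)) b
  have hAv : ∀ i x, (A i).mulVec ((bas (i + 1)).repr x) = (bas i).repr (dF i x) := fun i x =>
    LinearMap.toMatrix_mulVec_repr _ _ _ _
  have hA : ∀ i, A i * A (i + 1) = 0 := by
    intro i
    rw [← LinearMap.toMatrix_comp]
    have : dF i ∘ₗ dF (i + 1) = 0 := LinearMap.ext fun x => hdd i x
    rw [this, map_zero]
  have hactv : ∀ i v, act (A i) R v = (A i).mulVec v := fun i v => rfl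
  have hAR : ∀ i, ExAt A i R := by
    intro i v hv
    let x := (bas (i + 1)).equivFun.symm v
    have hx : ⇑((bas (i + 1)).repr x) = v := (bas (i + 1)).equivFun.apply_symm_apply v
    rw [hactv, ← hx, hAv] at hv
    have hx0 : dF i x = 0 := by
      apply (bas i).repr.injective
      rw [map_zero]
      exact DFunLike.coe_injective hv
    have : x ∈ LinearMap.range (dF (i + 1)) := by rw [hex]; exact hx0
    obtain ⟨w, hw⟩ := this
    exact ⟨(bas (i + 1 + 1)).repr w, by rw [hactv, hAv, hw, hx]⟩
  have hH : ∀ x ∈ mm 𝒜, ∀ i, ∃ n, ∃ (S : Matrix (c (i+2)) (c (i+1)) R)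
      (T : Matrix (c (i+1)) (c i) R), A (i+1) * S + T * A i = x ^ n • 1 := by
    intro x hx i
    obtain ⟨m, hm⟩ := mm_le_radical 𝒜 hneg I hI hIfl hx
    obtain ⟨s, t, hst⟩ := nullhtpy I F dF ε hex0 hex (x ^ m) hm i
    refine ⟨m, LinearMap.toMatrix (bas (i + 1)) (bas (i + 2)) s,
      LinearMap.toMatrix (bas i) (bas (i + 1)) t, ?_⟩
    rw [← LinearMap.toMatrix_comp, ← LinearMap.toMatrix_comp, ← map_add]
    have : dF (i + 1) ∘ₗ s + t ∘ₗ dF i = x ^ m • LinearMap.id := LinearMap.ext hst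
    rw [this, map_smul, LinearMap.toMatrix_id]
  have hTw : ∀ i v, ((A i).map φ).mulVec v = 0 → ∃ w, ((A (i + 1)).map φ).mulVec w = v := by
    intro i v hv
    have key := @acyc R _ c _ _ A hA (mm 𝒜) hH _ hmax ℓ hcempty hAR q R _ φ.toAlgebra
      (RingEquiv.refl R) hφ i v hv
    exact key
  -- the augmentation
  have hE' : ∀ b, ∃ E ∈ 𝒜 (deg 0 b), Ideal.Quotient.mk I E = ε (bas 0 b) := fun b => by
    obtain ⟨E, hE, h⟩ := hεdeg _ _ (hbas 0 b)
    exact ⟨E, hE, h⟩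
  choose E hEdeg hE using hE'
  have hεv : ∀ x, ε x = Ideal.Quotient.mk I (∑ b, (bas 0).repr x b * E b) := by
    intro x
    conv_lhs => rw [← (bas 0).sum_repr x]
    rw [map_sum, map_sum]
    refine Finset.sum_congr rfl fun b _ => ?_
    rw [map_smul, ← hE, map_mul]
    rfl
  -- the kernel of the augmentation in coordinates
  have hexI : ∀ v : c 0 → R, ∑ b, v b * E b ∈ I ↔ ∃ w, (A 0).mulVec w = v := by
    intro v
    let x := (bas 0).equivFun.symm v
    have hx : ⇑((bas 0).repr x) = v := (bas 0).equivFun.apply_symm_apply v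
    have h1 : ∑ b, v b * E b ∈ I ↔ ε x = 0 := by
      rw [hεv, hx, Ideal.Quotient.eq_zero_iff_mem]
    rw [h1, ← LinearMap.mem_ker, ← hex0]
    constructor
    · rintro ⟨w, hw⟩
      exact ⟨(bas 1).repr w, by rw [hAv, hw, hx]⟩
    · rintro ⟨w, hw⟩
      refine ⟨(bas 1).equivFun.symm w, ?_⟩
      apply (bas 0).repr.injective
      apply DFunLike.coe_injective
      rw [← hAv, hx, ← hw]
      congr 1
      exact (bas 1).equivFun.apply_symm_apply w
  have hu' : ∃ u : c 0 → R, (∀ b, u b ∈ 𝒜 (- deg 0 b)) ∧ 1 - ∑ b, u b * E b ∈ I := by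
    obtain ⟨x, hx⟩ := hεsurj 1
    rw [hεv, ← map_one (Ideal.Quotient.mk I), eq_comm, Ideal.Quotient.eq] at hx
    refine ⟨fun b => cp 𝒜 (- deg 0 b) ((bas 0).repr x b), fun b => cp_mem _ _ _, ?_⟩
    have := hI 0 hx
    rw [← cp_apply, map_sub, cp_zero_one, map_sum] at this
    convert this using 3 with b
    have h := cp_smul 𝒜 𝒜 (grsmul 𝒜) (hEdeg b) ((bas 0).repr x b) 0
    rw [smul_eq_mul, smul_eq_mul] at h
    rw [mul_comm ((bas 0).repr x b), h, mul_comm, zero_sub]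
  obtain ⟨u, hudeg, hu⟩ := hu'
  have hφmul : ∀ w : c 1 → R, ((A 0).map φ).mulVec (fun b => φ (w b)) =
      fun b => φ ((A 0).mulVec w b) := by
    intro w
    ext b
    simp [Matrix.mulVec, dotProduct]
  have hexJ : ∀ v : c 0 → R, ∑ b, v b * φ (E b) ∈ J ↔ ∃ w, ((A 0).map φ).mulVec w = v := by
    intro v
    let W : Submodule R (c 0 → R) := LinearMap.range ((A 0).map φ).mulVecLin
    have hWφ : ∀ v : c 0 → R, ∑ b, v b * E b ∈ I → (fun b => φ (v b)) ∈ W := by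
      intro v hv
      obtain ⟨w, hw⟩ := (hexI v).1 hv
      refine ⟨fun b => φ (w b), ?_⟩
      rw [Matrix.mulVecLin_apply, hφmul, hw]
    change _ ↔ v ∈ W
    constructor
    · intro hv
      have h1 : ∀ s ∈ J, (fun b => s * φ (u b)) ∈ W := by
        intro s hs
        refine Submodule.span_induction (p := fun s _ => (fun b => s * φ (u b)) ∈ W) ?_ ?_ ?_ ?_ hs
        · rintro _ ⟨f, hf, rfl⟩
          have := hWφ (fun b => f * u b) (by
            simp only [mul_assoc]
            rw [← Finset.mul_sum]
            exact I.mul_mem_right _ hf)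
          simpa [hφ, mul_pow] using this
        · simp only [zero_mul]; exact W.zero_mem
        · intro x y _ _ hx hy
          have := W.add_mem hx hy
          convert this using 1
          ext b; simp [add_mul]
        · intro a x _ hx
          have := W.smul_mem a hx
          convert this using 1
          ext b; simp [mul_assoc]
      have h2 : ∀ b, (fun b' => (if b' = b then 1 else 0) - φ (E b) * φ (u b')) ∈ W := by
        intro b
        have := hWφ (fun b' => (if b' = b then 1 else 0) - E b * u b') (by
          have h3 : ∑ b', ((if b' = b then 1 else 0) - E b * u b') * E b' =
              E b * (1 - ∑ b', u b' * E b') := by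
            simp only [sub_mul, Finset.sum_sub_distrib, ite_mul, one_mul, zero_mul, mul_sub,
              mul_one, Finset.mul_sum, mul_assoc]
            simp
          rw [h3]
          exact I.mul_mem_left _ hu)
        convert this using 2 with b'
        rw [map_sub, map_mul]
        split_ifs <;> simp
      have h3 : v = (∑ b, v b • fun b' => (if b' = b then 1 else 0) - φ (E b) * φ (u b')) +
          fun b' => (∑ b, v b * φ (E b)) * φ (u b') := by
        ext b'
        simp only [Pi.add_apply, Finset.sum_apply, Pi.smul_apply, smul_eq_mul, mul_sub,
          Finset.sum_sub_distrib, Finset.sum_mul, mul_assoc]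
        simp
      rw [h3]
      exact W.add_mem (W.sum_mem fun b _ => W.smul_mem _ (h2 b)) (h1 _ hv)
    · rintro ⟨w, rfl⟩
      have h1 : ∀ b', φ (∑ b, A 0 b b' * E b) ∈ J := by
        intro b'
        apply hφJ
        refine (hexI fun b => A 0 b b').2 ⟨Pi.single b' 1, ?_⟩
        ext b; simp
      have h2 : ∑ b, (((A 0).map φ).mulVecLin w) b * φ (E b) =
          ∑ b', w b' * φ (∑ b, A 0 b b' * E b) := by
        simp only [Matrix.mulVecLin_apply, Matrix.mulVec, dotProduct, Matrix.map_apply, map_sum,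
          map_mul, Finset.sum_mul, Finset.mul_sum]
        rw [Finset.sum_comm]
        refine Finset.sum_congr rfl fun b' _ => Finset.sum_congr rfl fun b _ => by ring
      rw [h2]
      exact Ideal.sum_mem _ fun b' _ => J.mul_mem_left _ (h1 b')
  have hJ : (bracketPow I (p ^ n) • ⊤ : Submodule R R) = J := by
    rw [smul_eq_mul, Ideal.mul_top]
  rw [hJ]
  refine count 𝒜 (piece_finite 𝒜 hneg hzero) c (fun i b => (q : ℤ) * deg i b)
    (fun i => (A i).map φ) ?_ (fun b => φ (E b)) (fun b => hφdeg (hEdeg b)) J ?_ hTw hexJ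
    (fun b => φ (u b)) ?_ ?_ ℓ hcempty j
  · intro i b b'
    have := hφdeg (hAdeg i b b')
    rwa [mul_sub] at this
  · intro i
    rw [← Matrix.map_mul, hA, Matrix.map_zero _ (map_zero φ)]
  · intro b
    have := hφdeg (hudeg b)
    rwa [mul_neg] at this
  · have := hφJ hu
    rw [map_sub, map_one, map_sum] at this
    simpa only [map_mul] using this

end Res
end FP

namespace FP

lemma tsum_int_range (f : ℤ → ℂ) (T : ℕ) (hneg : ∀ j < 0, f j = 0) (hT : ∀ j, (T : ℤ) ≤ j → f j = 0) :
    ∑' j : ℤ, f j = ∑ j ∈ Finset.range T, f j := by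
  rw [tsum_eq_sum (s := (Finset.range T).map Nat.castEmbedding), Finset.sum_map]
  · rfl
  · intro j hj
    rcases lt_or_ge j 0 with h | h
    · exact hneg j h
    · refine hT j ?_
      by_contra hlt
      apply hj
      rw [Finset.mem_map]
      refine ⟨j.toNat, Finset.mem_range.2 (by omega), ?_⟩
      simp only [Nat.castEmbedding_apply]; omega

lemma tsum_int_range_real (f : ℤ → ℝ) (T : ℕ) (hneg : ∀ j < 0, f j = 0)
    (hT : ∀ j, (T : ℤ) ≤ j → f j = 0) :
    ∑' j : ℤ, f j = ∑ j ∈ Finset.range T, f j := by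
  rw [tsum_eq_sum (s := (Finset.range T).map Nat.castEmbedding), Finset.sum_map]
  · rfl
  · intro j hj
    rcases lt_or_ge j 0 with h | h
    · exact hneg j h
    · refine hT j ?_
      by_contra hlt
      apply hj
      rw [Finset.mem_map]
      refine ⟨j.toNat, Finset.mem_range.2 (by omega), ?_⟩
      simp only [Nat.castEmbedding_apply]; omega

lemma sum_Icc_range (f : ℤ → ℂ) (B : ℕ) :
    ∑ j ∈ Finset.Icc (0 : ℤ) B, f j = ∑ m ∈ Finset.range (B + 1), f m := by
  refine Finset.sum_nbij' (fun j => j.toNat) (fun m => (m : ℤ)) ?_ ?_ ?_ ?_ ?_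
  · intro j hj; simp at hj ⊢; omega
  · intro j hj; simp at hj ⊢; omega
  · intro j hj; simp at hj ⊢; omega
  · intro j hj; simp
  · intro j hj
    simp only [Finset.mem_Icc] at hj
    congr 1; omega

/-- reorganising a sum over generators by degree -/
lemma sum_by_degree (ℓ : ℕ) (c : ℕ → Type) [∀ i, Fintype (c i)] (deg : ∀ i, c i → ℤ) :
    ∃ S : Finset ℤ, (∀ t ∉ S, ∑ α ∈ Finset.range (ℓ + 1), (-1 : ℂ) ^ α *
        ((Finset.univ.filter fun x => deg α x = t).card : ℂ) = 0) ∧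
      ∀ f : ℤ → ℂ, ∑ α ∈ Finset.range (ℓ + 1), (-1 : ℂ) ^ α * ∑ b, f (deg α b) =
        ∑ t ∈ S, (∑ α ∈ Finset.range (ℓ + 1), (-1 : ℂ) ^ α *
        ((Finset.univ.filter fun x => deg α x = t).card : ℂ)) * f t := by
  classical
  let S : Finset ℤ := (Finset.range (ℓ + 1)).biUnion fun α => Finset.univ.image (deg α)
  have hS : ∀ α ∈ Finset.range (ℓ + 1), ∀ b, deg α b ∈ S := fun α hα b =>
    Finset.mem_biUnion.2 ⟨α, hα, Finset.mem_image_of_mem _ (Finset.mem_univ _)⟩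
  refine ⟨S, fun t ht => ?_, fun f => ?_⟩
  · refine Finset.sum_eq_zero fun α hα => ?_
    rw [Finset.card_eq_zero.2, Nat.cast_zero, mul_zero]
    rw [Finset.filter_eq_empty_iff]
    rintro b - rfl
    exact ht (hS α hα b)
  · simp_rw [Finset.sum_mul]
    rw [Finset.sum_comm]
    refine Finset.sum_congr rfl fun α hα => ?_
    simp_rw [mul_assoc]
    rw [← Finset.mul_sum]
    congr 1
    rw [← Finset.sum_fiberwise_of_maps_to (s := Finset.univ) (t := S) (g := deg α)
      (fun b _ => hS α hα b)]
    refine Finset.sum_congr rfl fun t _ => ?_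
    rw [Finset.sum_congr rfl (g := fun _ => f t), Finset.sum_const, nsmul_eq_mul]
    intro b hb
    rw [(Finset.mem_filter.1 hb).2]

lemma bracket_large {k R : Type} [Field k] [CommRing R] [Algebra k R]
    (𝒜 : ℤ → Submodule k R) [GradedAlgebra 𝒜] [Nontrivial R] [Algebra.FiniteType k R]
    (hneg : ∀ t : ℤ, t < 0 → 𝒜 t = ⊥)
    (hzero : ∀ x ∈ 𝒜 0, ∃ c : k, algebraMap k R c = x)
    (I : Ideal R) (hI : Ideal.IsHomogeneous 𝒜 I) (hIfl : IsFiniteLength R (R ⧸ I)) (q : ℕ) :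
    ∃ T : ℕ, ∀ j : ℤ, (T : ℤ) ≤ j → Module.finrank k ((𝒜 j).map
        (((bracketPow I q • ⊤ : Submodule R R)).mkQ.restrictScalars k)) = 0 := by
  have : IsNoetherianRing R := Algebra.FiniteType.isNoetherianRing k R
  have hrad : mm 𝒜 ≤ (bracketPow I q).radical := by
    intro x hx
    obtain ⟨m, hm⟩ := mm_le_radical 𝒜 hneg I hI hIfl hx
    refine ⟨m * q, ?_⟩
    rw [pow_mul]
    exact Ideal.subset_span ⟨_, hm, rfl⟩
  obtain ⟨N, hN⟩ := Ideal.exists_pow_le_of_le_radical_of_fg hrad (IsNoetherian.noetherian _)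
  obtain ⟨T, hT⟩ := large_mem_pow 𝒜 hneg hzero N
  refine ⟨T.toNat, fun j hj => ?_⟩
  have : (𝒜 j).map (((bracketPow I q • ⊤ : Submodule R R)).mkQ.restrictScalars k) = ⊥ := by
    rw [eq_bot_iff]
    rintro _ ⟨x, hx, rfl⟩
    rw [Submodule.mem_bot]
    refine (Submodule.Quotient.mk_eq_zero _).2 ?_
    rw [smul_eq_mul, Ideal.mul_top]
    exact hN (hT j (by omega) x hx)
  rw [this, finrank_bot]

end FP

/-- **Frobenius–Poincaré functions in the finite projective dimension case.**
If `R/I` has finite projective dimension — witnessed by a finite graded free resolution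
`F_•` of `R/I` — and `𝔹(j) = Σ_α (-1)^α λ_k(Tor_α^R(k, R/I)_j)` vanishes for `j > b`
with `b` least such, then `F(R,R,I)(y) = e_R (Σ_{j=0}^{b} 𝔹(j)e^{-iyj})/(iy)^d`
for all `y ≠ 0`.  Here `Tor_α^R(k, R/I)` is computed as `H_α(F_• ⧸ 𝔪 F_•)` where `𝔪` is
the maximal homogeneous ideal of `R`. -/
theorem frobenius_poincare_finite_projective_dimension
    (k R : Type) [Field k] [CommRing R] [Algebra k R] [Algebra.FiniteType k R]
    (p : ℕ) (hp : p.Prime) [CharP R p]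
    (𝒜 : ℤ → Submodule k R) [GradedAlgebra 𝒜]
    (h𝒜neg : ∀ t : ℤ, t < 0 → 𝒜 t = ⊥)
    (h𝒜zero : ∀ x ∈ 𝒜 0, ∃ c : k, algebraMap k R c = x)
    (d : ℕ) (hd : ringKrullDim R = d)
    (I : Ideal R) (hI : Ideal.IsHomogeneous 𝒜 I) (hIfl : IsFiniteLength R (R ⧸ I))
    -- a finite graded free resolution `F_• → R/I`, witnessing finite projective dimension
    (F : ℕ → Type) [∀ i, AddCommGroup (F i)] [∀ i, Module R (F i)]
    [∀ i, Module k (F i)] [∀ i, IsScalarTower k R (F i)]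
    [∀ i, Module.Free R (F i)] [∀ i, Module.Finite R (F i)]
    (ℱ : ∀ i, ℤ → Submodule k (F i)) [∀ i, DirectSum.Decomposition (ℱ i)]
    (hℱ : ∀ (i : ℕ) (a b : ℤ), ∀ r ∈ 𝒜 a, ∀ x ∈ ℱ i b, r • x ∈ ℱ i (a + b))
    (dF : ∀ i, F (i + 1) →ₗ[R] F i) (ε : F 0 →ₗ[R] R ⧸ I)
    (hdFdeg : ∀ (i : ℕ) (t : ℤ), ∀ x ∈ ℱ (i + 1) t, dF i x ∈ ℱ i t)
    (hεdeg : ∀ t : ℤ, ∀ x ∈ ℱ 0 t,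
      ε x ∈ (𝒜 t).map (Ideal.Quotient.mkₐ k I).toLinearMap)
    (hεsurj : Function.Surjective ε)
    (hex0 : LinearMap.range (dF 0) = LinearMap.ker ε)
    (hex : ∀ i : ℕ, LinearMap.range (dF (i + 1)) = LinearMap.ker (dF i))
    (ℓ : ℕ) (hfinres : ∀ i : ℕ, ℓ < i → Subsingleton (F i))
    -- the number `b`
    (b : ℤ)
    (hb : ∀ j : ℤ, b < j →
      torAltSum k F ℱ dF (Ideal.span {x : R | ∃ t : ℤ, t ≠ 0 ∧ x ∈ 𝒜 t}) j = 0)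
    (hbmin : ∀ b' : ℤ, (∀ j : ℤ, b' < j →
      torAltSum k F ℱ dF (Ideal.span {x : R | ∃ t : ℤ, t ≠ 0 ∧ x ∈ 𝒜 t}) j = 0) → b ≤ b')
    -- the Hilbert–Samuel multiplicity
    (e : ℝ) (he : Tendsto (fun n : ℕ => hsSeq k 𝒜 d n) atTop (nhds e))
    (y : ℂ) (hy : y ≠ 0)
    (L : ℂ) (hL : Tendsto (fun n : ℕ => FnGen k 𝒜 I p d n y) atTop (nhds L)) :
    L = (e : ℂ) *
        (∑ j ∈ Finset.Icc (0 : ℤ) b,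
          torAltSum k F ℱ dF (Ideal.span {x : R | ∃ t : ℤ, t ≠ 0 ∧ x ∈ 𝒜 t}) j *
            Complex.exp (-Complex.I * y * (j : ℂ))) /
        (Complex.I * y) ^ d := by
  classical
  have hnt : Nontrivial R := by
    have := Fact.mk hp
    exact CharP.nontrivial_of_char_ne_one hp.one_lt.ne'
  have hfin := FP.piece_finite 𝒜 h𝒜neg h𝒜zero
  have hdd : ∀ i x, dF i (dF (i + 1) x) = 0 := fun i x => by
    have : dF (i + 1) x ∈ LinearMap.ker (dF i) := by rw [← hex]; exact ⟨x, rfl⟩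
    exact this
  choose N deg bas hbas using fun i =>
    FP.exists_hom_basis 𝒜 (ℱ i) h𝒜neg h𝒜zero (hℱ i)
  have htor := FP.torAltSum_eq 𝒜 h𝒜neg h𝒜zero F ℱ hℱ dF hdFdeg hdd ℓ hfinres
    (fun i => Fin (N i)) deg bas hbas
  have hcount := FP.res_count 𝒜 p hp h𝒜neg h𝒜zero I hI hIfl F ℱ hℱ dF ε hdFdeg hεdeg hεsurj
    hex0 hex ℓ hfinres (fun i => Fin (N i)) deg bas hbas
  obtain ⟨S, hS0, hS⟩ := FP.sum_by_degree ℓ (fun i => Fin (N i)) deg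
  simp only [← htor] at hS0 hS
  set 𝔹 : ℤ → ℂ := fun j => torAltSum k F ℱ dF (FP.mm 𝒜) j with h𝔹
  change ∀ j, b < j → 𝔹 j = 0 at hb
  change ∀ b', (∀ j, b' < j → 𝔹 j = 0) → b ≤ b' at hbmin
  change ∀ t ∉ S, 𝔹 t = 0 at hS0
  change ∀ f : ℤ → ℂ, _ = ∑ t ∈ S, 𝔹 t * f t at hS
  change L = (e : ℂ) * (∑ j ∈ Finset.Icc (0 : ℤ) b, 𝔹 j * Complex.exp (-Complex.I * y * (j : ℂ))) /
        (Complex.I * y) ^ d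
  let hZ : ℤ → ℂ := fun j => (Module.finrank k (𝒜 j) : ℂ)
  have hZneg : ∀ j < 0, hZ j = 0 := by
    intro j hj
    simp only [hZ]
    rw [h𝒜neg j hj, finrank_bot, Nat.cast_zero]
  have hZ0 : hZ 0 ≠ 0 := by
    have : Nontrivial (𝒜 0) :=
      ⟨⟨⟨1, SetLike.GradedOne.one_mem⟩, 0, fun h => one_ne_zero (congrArg Subtype.val h)⟩⟩
    have h1 : 0 < Module.finrank k (𝒜 0) := Module.finrank_pos
    simp only [hZ]
    exact_mod_cast h1.ne'
  let g : ℕ → ℤ → ℂ := fun n j => (Module.finrank k ((𝒜 j).map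
        (((bracketPow I (p ^ n) • ⊤ : Submodule R R)).mkQ.restrictScalars k)) : ℂ)
  have hgneg : ∀ n, ∀ j < 0, g n j = 0 := by
    intro n j hj
    simp only [g]
    rw [h𝒜neg j hj, Submodule.map_bot, finrank_bot, Nat.cast_zero]
  have hg : ∀ n j, g n j = ∑ t ∈ S, 𝔹 t * hZ (j - (p ^ n : ℕ) * t) := by
    intro n j
    rw [← hS fun t => hZ (j - (p ^ n : ℕ) * t)]
    exact hcount n j
  have h𝔹neg : ∀ t < 0, 𝔹 t = 0 := by
    by_contra! hcon
    obtain ⟨t0, ht0, ht0'⟩ := hcon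
    have hmemS : ∀ t, 𝔹 t ≠ 0 → t ∈ S := fun t ht => by
      by_contra h; exact ht (hS0 t h)
    have hne : (S.filter fun t => 𝔹 t ≠ 0).Nonempty :=
      ⟨t0, Finset.mem_filter.2 ⟨hmemS _ ht0', ht0'⟩⟩
    obtain ⟨t, ht, htmin⟩ := Finset.exists_min_image _ id hne
    rw [Finset.mem_filter] at ht
    have htle : t ≤ t0 := htmin t0 (Finset.mem_filter.2 ⟨hmemS _ ht0', ht0'⟩)
    have h1 := hg 0 t
    rw [hgneg 0 t (by omega), Finset.sum_eq_single t] at h1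
    · simp only [pow_zero, Nat.cast_one, one_mul, sub_self] at h1
      exact (mul_ne_zero ht.2 hZ0) h1.symm
    · intro s hs hst
      by_cases hs0 : 𝔹 s = 0
      · rw [hs0, zero_mul]
      · have : t ≤ s := htmin s (Finset.mem_filter.2 ⟨hs, hs0⟩)
        rw [hZneg, mul_zero]
        simp only [pow_zero, Nat.cast_one, one_mul]
        omega
    · intro h; exact absurd ht.1 h
  have hb0 : 0 ≤ b := by
    by_contra hlt
    have := hbmin (b - 1) (fun j hj => by
      rcases lt_or_ge j 0 with h | h
      · exact h𝔹neg j h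
      · exact hb j (by omega))
    omega
  obtain ⟨B, rfl⟩ := Int.eq_ofNat_of_zero_le hb0
  have hg' : ∀ n j, g n j = ∑ m ∈ Finset.range (B + 1), 𝔹 m * hZ (j - (p ^ n : ℕ) * m) := by
    intro n j
    rw [hg, ← FP.sum_Icc_range fun t => 𝔹 t * hZ (j - (p ^ n : ℕ) * t)]
    rw [Finset.sum_subset (Finset.subset_union_left (s₂ := Finset.Icc (0 : ℤ) B)),
      ← Finset.sum_subset (Finset.subset_union_right (s₁ := S))]
    · intro t _ ht
      rw [Finset.mem_Icc] at ht
      have : 𝔹 t = 0 := by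
        rcases lt_or_ge t 0 with h | h
        · exact h𝔹neg t h
        · exact hb t (by by_contra h'; exact ht ⟨h, by omega⟩)
      rw [this, zero_mul]
    · intro t _ ht
      rw [hS0 t ht, zero_mul]
  let P : Polynomial ℂ := ∑ m ∈ Finset.range (B + 1), Polynomial.C (𝔹 m) * Polynomial.X ^ m
  have hP0 : P ≠ 0 := by
    intro hP
    have hB : 𝔹 B = 0 := by
      have := congrArg (fun Q => Polynomial.coeff Q B) hP
      simpa [P, Polynomial.finsetSum_coeff, Polynomial.coeff_C_mul, Polynomial.coeff_X_pow] using this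
    have := hbmin (B - 1) (fun j hj => by
      rcases lt_or_eq_of_le (show (B : ℤ) ≤ j by omega) with h | h
      · exact hb j h
      · rw [← h]; exact hB)
    omega
  choose T hT using fun n => FP.bracket_large 𝒜 h𝒜neg h𝒜zero I hI hIfl (p ^ n)
  have hgT : ∀ n, ∀ j, (T n : ℤ) ≤ j → g n j = 0 := by
    intro n j hj
    simp only [g]
    rw [hT n j hj, Nat.cast_zero]
  let H : ℕ → Polynomial ℂ := fun n =>
    ∑ j ∈ Finset.range (T n), Polynomial.C (g n j) * Polynomial.X ^ j
  have hHcoeff : ∀ n (j : ℕ), (H n).coeff j = g n j := by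
    intro n j
    by_cases hj : j < T n
    · simp [H, Polynomial.finsetSum_coeff, Polynomial.coeff_C_mul, Polynomial.coeff_X_pow, hj]
    · rw [hgT n j (by omega)]
      simp only [H, Polynomial.finsetSum_coeff, Polynomial.coeff_C_mul, Polynomial.coeff_X_pow]
      refine Finset.sum_eq_zero fun i hi => ?_
      rw [Finset.mem_range] at hi
      rw [if_neg (by omega), mul_zero]
  have key := FP.analytic_part (fun j : ℕ => (Module.finrank k (𝒜 (j : ℤ)) : ℝ)) p d hp.one_lt P hP0 H
    ?_ e ?_ y hy L ?_
  · rw [key, FP.sum_Icc_range (fun j => 𝔹 j * Complex.exp (-Complex.I * y * (j : ℂ)))]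
    congr 2
    simp only [P, Polynomial.eval_finsetSum, Polynomial.eval_mul, Polynomial.eval_C,
      Polynomial.eval_pow, Polynomial.eval_X]
    refine Finset.sum_congr rfl fun m _ => ?_
    rw [← Complex.exp_nat_mul]
    congr 2
    push_cast; ring
  · intro n
    ext j
    rw [Polynomial.coeff_coe, hHcoeff, hg']
    have hexp : ((Polynomial.expand ℂ (p ^ n) P : Polynomial ℂ) : PowerSeries ℂ) =
        ∑ m ∈ Finset.range (B + 1), PowerSeries.C (𝔹 m) * PowerSeries.X ^ (p ^ n * m) := by
      simp only [P, map_sum, map_mul, map_pow, Polynomial.expand_C, Polynomial.expand_X]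
      rw [← Polynomial.coeToPowerSeries.ringHom_apply, map_sum]
      simp [pow_mul]
    rw [hexp, Finset.mul_sum, map_sum]
    refine Finset.sum_congr rfl fun m _ => ?_
    rw [mul_left_comm, PowerSeries.coeff_C_mul, PowerSeries.coeff_mul_X_pow']
    congr 1
    split_ifs with hle
    · rw [PowerSeries.coeff_mk]
      have hidx : (j : ℤ) - (p ^ n : ℕ) * m = ((j - p ^ n * m : ℕ) : ℤ) := by
        rw [Nat.cast_sub hle, Nat.cast_mul]
      rw [hidx]
      simp only [hZ, Complex.ofReal_natCast]
    · refine hZneg _ ?_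
      have : (j : ℤ) < ((p ^ n * m : ℕ) : ℤ) := by exact_mod_cast not_le.1 hle
      rw [Nat.cast_mul] at this
      omega
  · refine he.congr fun n => ?_
    rw [hsSeq, FP.tsum_int_range_real _ (n + 1)]
    · congr 1
      refine Finset.sum_congr rfl fun j hj => ?_
      rw [Finset.mem_range] at hj
      rw [if_pos (by omega)]
    · intro j hj
      rw [h𝒜neg j hj, finrank_bot]; simp
    · intro j hj
      rw [if_neg (by push_cast at hj; omega)]
  · refine hL.congr fun n => ?_
    rw [FnGen, FP.tsum_int_range _ (T n)]
    · congr 1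
      simp only [H, Polynomial.eval_finsetSum, Polynomial.eval_mul, Polynomial.eval_C,
        Polynomial.eval_pow, Polynomial.eval_X]
      refine Finset.sum_congr rfl fun m _ => ?_
      rw [← Complex.exp_nat_mul]
      congr 2
      push_cast; ring
    · intro j hj
      have := hgneg n j hj
      simp only [g] at this
      rw [this, zero_mul]
    · intro j hj
      have := hgT n j hj
      simp only [g] at this
      rw [this, zero_mul]

end
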